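/- arXiv:math/0507505 — 2 statements merged into one kernel-verified Lean document; each statement's English description precedes it below -/
import Mathlib

section
/- For integers m ≥ 2 and r ≥ 2, the affine plane curve C = {(x, y) ∈ ℂ² : μ x^m − y^r = 0}, for any μ ∈ ℂ*, admits no nontrivial algebraic action of the additive group (ℂ, +). Equivalently, every locally nilpotent derivation of the ring ℂ[x, y]/(μ x^m − y^r) is zero. -/
open MvPolynomial

set_option synthInstance.maxHeartbeats 1000000
set_option maxHeartbeats 1000000

/-!
The singular locus of a variety is invariant under every derivation: if `δ` preserves the ideal
`(f)`, then `δ (d f) = d (δ f) + ⁅δ, d⁆ f` shows that it preserves the Jacobian ideal of `f`.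
For `f = μ x ^ m - y ^ r` with `m, r ≥ 2` the singular locus is the origin, and on the curve it is
cut out by `x` alone, and also by `y` alone.

On a domain of characteristic zero, applying a locally nilpotent derivation to a nonzero element of
an invariant ideal until just before it vanishes produces a nonzero constant of `D` in that ideal.
Applied to the Jacobian ideal, this gives a nonzero constant of which a power is divisible by `x`.
Divisors of nonzero constants are constants, so `D x = 0`, and likewise `D y = 0`. The curve may be
reducible, but it is reduced, and its components are `D`-invariant, so one may argue on each of
them.
-/

section LocallyNilpotent

variable {R B : Type*} [CommRing R] [CommRing B] [Algebra R B] {D : Derivation R B B}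

theorem derivation_iterate_mul (D : Derivation R B B) (n : ℕ) (a b : B) :
    D^[n] (a * b) = ∑ ij ∈ Finset.HasAntidiagonal.antidiagonal n,
      n.choose ij.1 • (D^[ij.1] a * D^[ij.2] b) := by
  induction n with
  | zero => simp
  | succ n ih =>
    rw [Finset.sum_antidiagonal_choose_succ_nsmul (M := B) (fun i j ↦ D^[i] a * D^[j] b) n]
    simp only [Function.iterate_succ_apply', ih, map_sum, map_nsmul, Derivation.leibniz,
      smul_eq_mul, smul_add, Finset.sum_add_distrib, add_right_inj]
    refine Finset.sum_congr rfl fun ⟨i, j⟩ hij ↦ ?_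
    rw [n.choose_symm_of_eq_add (Finset.HasAntidiagonal.mem_antidiagonal.1 hij).symm, mul_comm]

theorem derivation_iterate_eq_zero_of_lt {n k : ℕ} {b : B} (hb : D^[n] b = 0) (hnk : n ≤ k) :
    D^[k] b = 0 := by
  obtain ⟨j, rfl⟩ := Nat.exists_eq_add_of_le' hnk
  rw [Function.iterate_add_apply, hb, iterate_map_zero]

theorem derivation_iterate_add_mul {i j : ℕ} {a b : B} (ha : D^[i + 1] a = 0)
    (hb : D^[j + 1] b = 0) :
    D^[i + j] (a * b) = (i + j).choose i • (D^[i] a * D^[j] b) := by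
  rw [derivation_iterate_mul]
  refine Finset.sum_eq_single_of_mem (i, j) (by simp) fun ⟨k, l⟩ hkl hne ↦ ?_
  rw [Finset.HasAntidiagonal.mem_antidiagonal] at hkl
  rcases lt_trichotomy k i with hk | rfl | hk
  · rw [derivation_iterate_eq_zero_of_lt hb (k := l) (by omega), mul_zero, smul_zero]
  · exact absurd (by simpa using hkl) hne
  · rw [derivation_iterate_eq_zero_of_lt ha (k := k) (by omega), zero_mul, smul_zero]

/-- A derivation `D` is locally nilpotent if each element is killed by some power of `D`, which
may depend on the element. -/
def IsLocallyNilpotent (D : Derivation R B B) : Prop :=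
  ∀ b, ∃ n : ℕ, D^[n] b = 0

namespace IsLocallyNilpotent

theorem exists_iterate_ne_zero (hD : IsLocallyNilpotent D) {b : B} (hb : b ≠ 0) :
    ∃ n : ℕ, D^[n] b ≠ 0 ∧ D^[n + 1] b = 0 := by
  classical
  obtain ⟨n, hn⟩ : ∃ n, Nat.find (hD b) = n + 1 :=
    Nat.exists_eq_succ_of_ne_zero fun h ↦ hb (by simpa [h] using Nat.find_spec (hD b))
  exact ⟨n, Nat.find_min (hD b) (by omega), hn ▸ Nat.find_spec (hD b)⟩

theorem apply_left_eq_zero_of_apply_mul_eq_zero [IsDomain B] [CharZero B]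
    (hD : IsLocallyNilpotent D) {a b : B} (hab : a * b ≠ 0) (h : D (a * b) = 0) : D a = 0 := by
  obtain ⟨i, hi, hi'⟩ := hD.exists_iterate_ne_zero (left_ne_zero_of_mul hab)
  obtain ⟨j, hj, hj'⟩ := hD.exists_iterate_ne_zero (right_ne_zero_of_mul hab)
  have hchoose : (i + j).choose i ≠ 0 := (Nat.choose_pos (Nat.le_add_right i j)).ne'
  have htop : D^[i + j] (a * b) ≠ 0 := by
    rw [derivation_iterate_add_mul hi' hj']
    exact smul_ne_zero hchoose (mul_ne_zero hi hj)
  have hij : i + j < 1 := by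
    by_contra! hle
    exact htop (derivation_iterate_eq_zero_of_lt (n := 1) h hle)
  obtain rfl : i = 0 := by omega
  exact hi'

theorem apply_eq_zero_of_le_radical_span [IsDomain B] [CharZero B] (hD : IsLocallyNilpotent D)
    {J : Ideal B} (hJ : Set.MapsTo D J J) (hJ0 : J ≠ ⊥) {x : B}
    (hx : J ≤ (Ideal.span {x}).radical) : D x = 0 := by
  obtain ⟨b, hbJ, hb⟩ := Submodule.exists_mem_ne_zero_of_ne_bot hJ0
  obtain ⟨n, hc, hDc⟩ := hD.exists_iterate_ne_zero hb
  obtain ⟨N, hN⟩ := hx (hJ.iterate n hbJ)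
  obtain ⟨z, hz⟩ := Ideal.mem_span_singleton.1 hN
  rw [Function.iterate_succ_apply'] at hDc
  refine hD.apply_left_eq_zero_of_apply_mul_eq_zero (b := z) (hz ▸ pow_ne_zero N hc) ?_
  rw [← hz, Derivation.leibniz_pow, hDc, smul_zero, smul_zero]

end IsLocallyNilpotent

theorem exists_notMem_mul_eq_zero_of_mem_minimalPrimes [IsReduced B] {p : Ideal B}
    (hp : p ∈ minimalPrimes B) {b : B} (hb : b ∈ p) : ∃ s ∉ p, s * b = 0 := by
  have := hp.isPrime
  have : Ring.KrullDimLE 0 (Localization.AtPrime p) := .of_isLocalization _ hp _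
  let : Field (Localization.AtPrime p) := Ring.KrullDimLE.isField_of_isReduced.toField
  have hb0 : algebraMap B (Localization.AtPrime p) b = 0 := by
    rw [← Ideal.mem_bot, ← IsLocalRing.maximalIdeal_eq_bot,
      ← Localization.AtPrime.map_eq_maximalIdeal]
    exact Ideal.mem_map_of_mem _ hb
  obtain ⟨⟨s, hs⟩, hsb⟩ := (IsLocalization.map_eq_zero_iff p.primeCompl _ b).1 hb0
  exact ⟨s, hs, hsb⟩

theorem mapsTo_of_mem_minimalPrimes [IsReduced B] (D : Derivation R B B) {p : Ideal B}
    (hp : p ∈ minimalPrimes B) : Set.MapsTo D p p := by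
  intro b hb
  obtain ⟨s, hs, hsb⟩ := exists_notMem_mul_eq_zero_of_mem_minimalPrimes hp hb
  have hDsb : s * D b + b * D s = 0 := by
    simpa only [Derivation.leibniz, smul_eq_mul, map_zero] using congrArg D hsb
  have hssDb : s * s * D b = 0 := by linear_combination s * hDsb - D s * hsb
  exact (hp.isPrime.mem_or_mem_of_mul_eq_zero hssDb).resolve_left
    (hp.isPrime.mul_notMem hs hs)

/-- The derivation induced by `D` on the quotient by a `D`-invariant ideal. -/
noncomputable def quotientDerivation (D : Derivation R B B) {I : Ideal B}
    (hI : Set.MapsTo D I I) : Derivation R (B ⧸ I) (B ⧸ I) :=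
  Derivation.liftOfSurjective (f := Ideal.Quotient.mkₐ R I) (Ideal.Quotient.mkₐ_surjective R I)
    (d := D) fun _ hb ↦ Ideal.Quotient.eq_zero_iff_mem.2 (hI (Ideal.Quotient.eq_zero_iff_mem.1 hb))

theorem quotientDerivation_mk (D : Derivation R B B) {I : Ideal B} (hI : Set.MapsTo D I I)
    (b : B) : quotientDerivation D hI (Ideal.Quotient.mk I b) = Ideal.Quotient.mk I (D b) :=
  Derivation.liftOfSurjective_apply (f := Ideal.Quotient.mkₐ R I)
    (Ideal.Quotient.mkₐ_surjective R I) (d := D)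
    (fun _ hb ↦ Ideal.Quotient.eq_zero_iff_mem.2 (hI (Ideal.Quotient.eq_zero_iff_mem.1 hb))) b

theorem isLocallyNilpotent_quotientDerivation (hD : IsLocallyNilpotent D) {I : Ideal B}
    (hI : Set.MapsTo D I I) : IsLocallyNilpotent (quotientDerivation D hI) := by
  refine Ideal.Quotient.mk_surjective.forall.2 fun b ↦ ?_
  obtain ⟨n, hn⟩ := hD b
  have hsemiconj : Function.Semiconj (Ideal.Quotient.mk I) D (quotientDerivation D hI) :=
    fun b ↦ (quotientDerivation_mk D hI b).symm
  exact ⟨n, by rw [← hsemiconj.iterate_right n b, hn, map_zero]⟩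

theorem mapsTo_map_mk {A : Type*} [CommRing A] [Algebra R A] {I J : Ideal A}
    {δ : Derivation R A A} {D : Derivation R (A ⧸ I) (A ⧸ I)}
    (hδ : ∀ a, D (Ideal.Quotient.mk I a) = Ideal.Quotient.mk I (δ a)) (hJ : Set.MapsTo δ J J) :
    Set.MapsTo D (J.map (Ideal.Quotient.mk I)) (J.map (Ideal.Quotient.mk I)) := by
  intro b hb
  obtain ⟨a, ha, rfl⟩ :=
    (Ideal.mem_map_iff_of_surjective _ Ideal.Quotient.mk_surjective).1 hb
  exact hδ a ▸ Ideal.mem_map_of_mem _ (hJ ha)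

end LocallyNilpotent

section Reduced

variable {K B : Type*} [Field K] [CharZero K] [CommRing B] [Algebra K B] {D : Derivation K B B}

theorem IsLocallyNilpotent.apply_eq_zero_of_radical_eq [IsReduced B] (hD : IsLocallyNilpotent D)
    {J : Ideal B} (hJ : Set.MapsTo D J J) {x : B} (hx : J.radical = (Ideal.span {x}).radical) :
    D x = 0 := by
  suffices ∀ p ∈ minimalPrimes B, D x ∈ p by
    have hnil : D x ∈ (⊥ : Ideal B).radical := by
      rw [← Ideal.sInf_minimalPrimes]
      exact Ideal.mem_sInf.2 fun {p} ↦ this p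
    simpa using hnil
  intro p hp
  have := hp.isPrime
  have hDp := mapsTo_of_mem_minimalPrimes D hp
  by_cases hJp : J ≤ p
  · have hxJ : x ∈ J.radical := hx ▸ Ideal.le_radical (Ideal.mem_span_singleton_self x)
    exact hDp (hp.isPrime.radical_le_iff.2 hJp hxJ)
  have : CharZero (B ⧸ p) := charZero_of_injective_algebraMap (algebraMap K (B ⧸ p)).injective
  rw [← Ideal.Quotient.eq_zero_iff_mem, ← quotientDerivation_mk D hDp]
  refine (isLocallyNilpotent_quotientDerivation hD hDp).apply_eq_zero_of_le_radical_span
    (mapsTo_map_mk (quotientDerivation_mk D hDp) hJ) ?_ ?_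
  · rwa [Ne, Ideal.map_eq_bot_iff_le_ker, Ideal.mk_ker]
  · calc J.map (Ideal.Quotient.mk p) ≤ (Ideal.span {x}).radical.map (Ideal.Quotient.mk p) :=
          Ideal.map_mono (hx ▸ Ideal.le_radical)
      _ ≤ ((Ideal.span {x}).map (Ideal.Quotient.mk p)).radical := Ideal.map_radical_le _
      _ = (Ideal.span {Ideal.Quotient.mk p x}).radical := by
        rw [Ideal.map_span, Set.image_singleton]

end Reduced

section JacobianIdeal

variable (R : Type*) {A : Type*} [CommRing R] [CommRing A] [Algebra R A]

/-- The Jacobian ideal of `f`, generated by `f` and its derivatives. It cuts out the singular locus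
of the hypersurface `f = 0`. Allowing all `R`-derivations of `A`, and not only the partial
derivatives of a polynomial ring, makes its invariance under derivations immediate. -/
def jacobianIdeal (f : A) : Ideal A :=
  Ideal.span (insert f (Set.range fun d : Derivation R A A ↦ d f))

variable {R}

theorem self_mem_jacobianIdeal (f : A) : f ∈ jacobianIdeal R f :=
  Ideal.subset_span (Set.mem_insert _ _)

theorem derivation_apply_mem_jacobianIdeal (d : Derivation R A A) (f : A) :
    d f ∈ jacobianIdeal R f :=
  Ideal.subset_span (Set.mem_insert_of_mem _ ⟨d, rfl⟩)

theorem jacobianIdeal_le_iff {f : A} {I : Ideal A} :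
    jacobianIdeal R f ≤ I ↔ f ∈ I ∧ ∀ d : Derivation R A A, d f ∈ I := by
  rw [jacobianIdeal, Ideal.span_le, Set.insert_subset_iff, Set.range_subset_iff]
  rfl

theorem mapsTo_span {δ : Derivation R A A} {s : Set A} (h : ∀ a ∈ s, δ a ∈ Ideal.span s) :
    Set.MapsTo δ (Ideal.span s) (Ideal.span s) := by
  intro a ha
  induction ha using Submodule.span_induction with
  | mem a ha => exact h a ha
  | zero => simp
  | add a b _ _ ha hb => simpa only [map_add, SetLike.mem_coe] using add_mem ha hb
  | smul c a ha hδa =>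
    rw [smul_eq_mul, Derivation.leibniz]
    exact add_mem (Ideal.mul_mem_left _ c hδa) (Ideal.mul_mem_right _ _ ha)

theorem mapsTo_jacobianIdeal {δ : Derivation R A A} {f : A} (hδ : f ∣ δ f) :
    Set.MapsTo δ (jacobianIdeal R f) (jacobianIdeal R f) := by
  refine mapsTo_span ?_
  rintro _ (rfl | ⟨d, rfl⟩)
  · exact derivation_apply_mem_jacobianIdeal δ _
  obtain ⟨h, hh⟩ := hδ
  have hcomm : δ (d f) = d (δ f) + ⁅δ, d⁆ f := by rw [Derivation.commutator_apply]; abel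
  change δ (d f) ∈ jacobianIdeal R f
  rw [hcomm, hh, Derivation.leibniz]
  exact add_mem (add_mem (Ideal.mul_mem_right _ _ (self_mem_jacobianIdeal f))
    (Ideal.mul_mem_left _ h (derivation_apply_mem_jacobianIdeal d f)))
    (derivation_apply_mem_jacobianIdeal _ f)

theorem dvd_derivation_apply_of_mul_self_dvd (d : Derivation R A A) {f g : A} (h : g * g ∣ f) :
    g ∣ d f := by
  obtain ⟨u, rfl⟩ := h
  rw [mul_assoc, Derivation.leibniz, Derivation.leibniz]
  exact ⟨g * d u + u * d g + u * d g, by simp only [smul_eq_mul]; ring⟩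

end JacobianIdeal

section QuotientPolynomial

variable {R σ : Type*} [CommRing R] {I : Ideal (MvPolynomial σ R)}

theorem exists_derivation_lift_of_quotient
    (D : Derivation R (MvPolynomial σ R ⧸ I) (MvPolynomial σ R ⧸ I)) :
    ∃ δ : Derivation R (MvPolynomial σ R) (MvPolynomial σ R),
      ∀ g, D (Ideal.Quotient.mk I g) = Ideal.Quotient.mk I (δ g) := by
  choose F hF using fun i ↦ Ideal.Quotient.mk_surjective (D (Ideal.Quotient.mk I (X i)))
  have h : D.compAlgebraMap (MvPolynomial σ R) =
      (Algebra.linearMap (MvPolynomial σ R) (MvPolynomial σ R ⧸ I)).compDer (mkDerivation R F) :=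
    derivation_ext fun i ↦ by
      change D (Ideal.Quotient.mk I (X i)) = Ideal.Quotient.mk I (mkDerivation R F (X i))
      rw [mkDerivation_X, hF]
  exact ⟨mkDerivation R F, Derivation.congr_fun h⟩

theorem derivation_quotient_eq_zero
    {D : Derivation R (MvPolynomial σ R ⧸ I) (MvPolynomial σ R ⧸ I)}
    (h : ∀ i, D (Ideal.Quotient.mk I (X i)) = 0) : D = 0 := by
  have h0 : D.compAlgebraMap (MvPolynomial σ R) = 0 := derivation_ext h
  exact Derivation.ext (Ideal.Quotient.mk_surjective.forall.2 (Derivation.congr_fun h0))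

end QuotientPolynomial

section Hypersurface

variable {K σ : Type*} [Field K] [CharZero K]

theorem IsLocallyNilpotent.apply_mk_eq_zero_of_radical_eq {f : MvPolynomial σ K}
    (hf : Squarefree f)
    {D : Derivation K (MvPolynomial σ K ⧸ Ideal.span {f}) (MvPolynomial σ K ⧸ Ideal.span {f})}
    (hD : IsLocallyNilpotent D) {x : MvPolynomial σ K}
    (hx : (jacobianIdeal K f).radical = (Ideal.span {f, x}).radical) :
    D (Ideal.Quotient.mk _ x) = 0 := by
  have : IsReduced (MvPolynomial σ K ⧸ Ideal.span {f}) :=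
    (Ideal.isRadical_iff_quotient_reduced _).1 (isRadical_iff_span_singleton.1 hf.isRadical)
  obtain ⟨δ, hδ⟩ := exists_derivation_lift_of_quotient D
  have hmkf : Ideal.Quotient.mk (Ideal.span {f}) f = 0 :=
    Ideal.Quotient.eq_zero_iff_mem.2 (Ideal.mem_span_singleton_self f)
  have hδf : f ∣ δ f := by
    rw [← Ideal.mem_span_singleton, ← Ideal.Quotient.eq_zero_iff_mem, ← hδ, hmkf, map_zero]
  refine hD.apply_eq_zero_of_radical_eq (mapsTo_map_mk hδ (mapsTo_jacobianIdeal hδf)) ?_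
  have hker {J : Ideal (MvPolynomial σ K)} (hfJ : f ∈ J) :
      RingHom.ker (Ideal.Quotient.mk (Ideal.span {f})) ≤ J := by
    rwa [Ideal.mk_ker, Ideal.span_singleton_le_iff_mem]
  have hmap := congrArg (Ideal.map (Ideal.Quotient.mk (Ideal.span {f}))) hx
  rwa [Ideal.map_radical_of_surjective Ideal.Quotient.mk_surjective
      (hker (self_mem_jacobianIdeal f)),
    Ideal.map_radical_of_surjective Ideal.Quotient.mk_surjective
      (hker (Ideal.subset_span (Set.mem_insert _ _))),
    Ideal.map_span, Set.image_pair, hmkf, Ideal.span_insert_zero] at hmap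

end Hypersurface

section Curve

variable {K : Type*} [Field K] {m r : ℕ} {μ : K}

/-- The equation `μ x ^ m - y ^ r` of the plane curve, with `x = X 0` and `y = X 1`. -/
noncomputable def curvePolynomial (m r : ℕ) (μ : K) : MvPolynomial (Fin 2) K :=
  C μ * X 0 ^ m - X 1 ^ r

theorem X_zero_mem_radical_iff_X_one_mem_radical (hm : m ≠ 0) (hr : r ≠ 0) (hμ : μ ≠ 0)
    {I : Ideal (MvPolynomial (Fin 2) K)} (hI : curvePolynomial m r μ ∈ I) :
    X 0 ∈ I.radical ↔ X 1 ∈ I.radical := by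
  have hC : IsUnit (C μ : MvPolynomial (Fin 2) K) := hμ.isUnit.map C
  have hpow {n : ℕ} (hn : n ≠ 0) (i : Fin 2) : X i ^ n ∈ I.radical ↔ X i ∈ I.radical :=
    ⟨Ideal.mem_radical_of_pow_mem, fun h ↦ Ideal.pow_mem_of_mem _ h n (Nat.pos_of_ne_zero hn)⟩
  rw [← hpow hm, ← hpow hr, ← Ideal.unit_mul_mem_iff_mem _ hC,
    ← sub_add_cancel (C μ * X 0 ^ m) (X 1 ^ r)]
  exact Ideal.add_mem_iff_right _ (Ideal.le_radical hI)

theorem derivation_curvePolynomial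
    (d : Derivation K (MvPolynomial (Fin 2) K) (MvPolynomial (Fin 2) K)) :
    d (curvePolynomial m r μ) =
      C (μ * m) * X 0 ^ (m - 1) * d (X 0) - C (r : K) * X 1 ^ (r - 1) * d (X 1) := by
  rw [curvePolynomial, map_sub, Derivation.leibniz, Derivation.leibniz_pow,
    Derivation.leibniz_pow, ← algebraMap_eq, Derivation.map_algebraMap]
  simp only [smul_eq_mul, nsmul_eq_mul, mul_zero, add_zero, map_mul, map_natCast]
  ring

theorem jacobianIdeal_curvePolynomial_le_radical (hm : 2 ≤ m) (hr : 2 ≤ r)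
    {I : Ideal (MvPolynomial (Fin 2) K)} (hI : curvePolynomial m r μ ∈ I)
    (hX : ∀ i, X i ∈ I.radical) : jacobianIdeal K (curvePolynomial m r μ) ≤ I.radical := by
  refine jacobianIdeal_le_iff.2 ⟨Ideal.le_radical hI, fun d ↦ ?_⟩
  rw [derivation_curvePolynomial]
  have hpow (i : Fin 2) {n : ℕ} (hn : 2 ≤ n) : X i ^ (n - 1) ∈ I.radical :=
    Ideal.pow_mem_of_mem _ (hX i) _ (by omega)
  exact sub_mem (Ideal.mul_mem_right _ _ (Ideal.mul_mem_left _ _ (hpow 0 hm)))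
    (Ideal.mul_mem_right _ _ (Ideal.mul_mem_left _ _ (hpow 1 hr)))

variable [CharZero K]

theorem associated_pderiv_zero_curvePolynomial (hm : m ≠ 0) (hμ : μ ≠ 0) :
    Associated (pderiv 0 (curvePolynomial m r μ)) (X 0 ^ (m - 1)) := by
  have hunit : IsUnit (C (μ * m) : MvPolynomial (Fin 2) K) :=
    (mul_ne_zero hμ (Nat.cast_ne_zero.2 hm)).isUnit.map C
  rw [derivation_curvePolynomial, pderiv_X_self, pderiv_X_of_ne one_ne_zero, mul_one, mul_zero,
    sub_zero]
  exact (associated_isUnit_mul_left_iff hunit).2 (.refl _)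

theorem associated_pderiv_one_curvePolynomial (hr : r ≠ 0) :
    Associated (pderiv 1 (curvePolynomial m r μ)) (X 1 ^ (r - 1)) := by
  have hunit : IsUnit (C (r : K) : MvPolynomial (Fin 2) K) :=
    (Nat.cast_ne_zero.2 hr).isUnit.map C
  rw [derivation_curvePolynomial, pderiv_X_self, pderiv_X_of_ne zero_ne_one, mul_one, mul_zero,
    zero_sub]
  exact ((associated_isUnit_mul_left_iff hunit).2 (.refl _)).neg_left

theorem squarefree_curvePolynomial (hm : m ≠ 0) (hr : r ≠ 0) (hμ : μ ≠ 0) :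
    Squarefree (curvePolynomial m r μ) := by
  intro g hg
  have hg0 : g ∣ X 0 ^ (m - 1) := (associated_pderiv_zero_curvePolynomial hm hμ).dvd_iff_dvd_right.1
    (dvd_derivation_apply_of_mul_self_dvd (pderiv 0) hg)
  have hg1 : g ∣ X 1 ^ (r - 1) := (associated_pderiv_one_curvePolynomial hr).dvd_iff_dvd_right.1
    (dvd_derivation_apply_of_mul_self_dvd (pderiv 1) hg)
  have hX : IsRelPrime (X 0 : MvPolynomial (Fin 2) K) (X 1) :=
    (X_prime (i := 0)).irreducible.isRelPrime_iff_not_dvd.2 (by simp [X_dvd_X])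
  exact hX.pow hg0 hg1

theorem X_mem_radical_jacobianIdeal_curvePolynomial (hm : m ≠ 0) (hr : r ≠ 0) (hμ : μ ≠ 0)
    (i : Fin 2) : X i ∈ (jacobianIdeal K (curvePolynomial m r μ)).radical := by
  have h0 : X 0 ∈ (jacobianIdeal K (curvePolynomial m r μ)).radical :=
    ⟨m - 1, (Ideal.mem_iff_of_associated (associated_pderiv_zero_curvePolynomial hm hμ)).1
      (derivation_apply_mem_jacobianIdeal (pderiv 0) _)⟩
  have h1 := (X_zero_mem_radical_iff_X_one_mem_radical hm hr hμ (self_mem_jacobianIdeal _)).1 h0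
  fin_cases i
  · exact h0
  · exact h1

theorem radical_jacobianIdeal_curvePolynomial (hm : 2 ≤ m) (hr : 2 ≤ r) (hμ : μ ≠ 0)
    (i : Fin 2) : (jacobianIdeal K (curvePolynomial m r μ)).radical =
      (Ideal.span {curvePolynomial m r μ, X i}).radical := by
  have hm0 : m ≠ 0 := by omega
  have hr0 : r ≠ 0 := by omega
  apply le_antisymm <;> rw [Ideal.radical_le_radical_iff]
  · have hf : curvePolynomial m r μ ∈ Ideal.span {curvePolynomial m r μ, X i} :=
      Ideal.subset_span (Set.mem_insert _ _)
    have hXi : X i ∈ (Ideal.span {curvePolynomial m r μ, X i}).radical :=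
      Ideal.le_radical (Ideal.subset_span (Set.mem_insert_of_mem _ rfl))
    have hiff := X_zero_mem_radical_iff_X_one_mem_radical hm0 hr0 hμ hf
    refine jacobianIdeal_curvePolynomial_le_radical hm hr hf (Fin.forall_fin_two.2 ?_)
    fin_cases i
    · exact ⟨hXi, hiff.1 hXi⟩
    · exact ⟨hiff.2 hXi, hXi⟩
  · rw [Ideal.span_le, Set.pair_subset_iff]
    exact ⟨Ideal.le_radical (self_mem_jacobianIdeal _),
      X_mem_radical_jacobianIdeal_curvePolynomial hm0 hr0 hμ i⟩

theorem stmt9_general (hm : 2 ≤ m) (hr : 2 ≤ r) (hμ : μ ≠ 0)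
    (D : Derivation K (MvPolynomial (Fin 2) K ⧸ Ideal.span {curvePolynomial m r μ})
      (MvPolynomial (Fin 2) K ⧸ Ideal.span {curvePolynomial m r μ}))
    (hD : IsLocallyNilpotent D) : D = 0 :=
  derivation_quotient_eq_zero fun i ↦ hD.apply_mk_eq_zero_of_radical_eq
    (squarefree_curvePolynomial (by omega) (by omega) hμ)
    (radical_jacobianIdeal_curvePolynomial hm hr hμ i)

end Curve

/-- For `m, r ≥ 2` and `μ ∈ ℂ*`, every locally nilpotent
`ℂ`-derivation of `ℂ[x,y]/(μ x^m − y^r)` is zero (the curve admits no nontrivial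
`ℂ₊`-action). -/
theorem stmt9 (m r : ℕ) (hm : 2 ≤ m) (hr : 2 ≤ r) (μ : ℂ) (hμ : μ ≠ 0)
    (D : Derivation ℂ
      (MvPolynomial (Fin 2) ℂ ⧸
        Ideal.span ({MvPolynomial.C μ * MvPolynomial.X 0 ^ m - MvPolynomial.X 1 ^ r} :
          Set (MvPolynomial (Fin 2) ℂ)))
      (MvPolynomial (Fin 2) ℂ ⧸
        Ideal.span ({MvPolynomial.C μ * MvPolynomial.X 0 ^ m - MvPolynomial.X 1 ^ r} :
          Set (MvPolynomial (Fin 2) ℂ))))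
    (hln : ∀ b, ∃ n : ℕ, (⇑D)^[n] b = 0) :
    D = 0 :=
  stmt9_general hm hr hμ D hln
end

section
/- Let B be the coordinate ring of X = {x₁^{m₁}⋯xₙ^{mₙ} z = Q(x,y)} ⊂ ℂ^{n+2}, where Q is monic in y of degree r ≥ 2 and all mᵢ ≥ 2. Then the subring of B consisting of elements annihilated by every locally nilpotent ℂ-derivation of B (the Makar-Limanov invariant ML(X)) equals ℂ[x₁,…,xₙ]. -/
open MvPolynomial

set_option synthInstance.maxHeartbeats 1000000
set_option maxHeartbeats 1000000

/-!
The defining equation embeds the coordinate ring into the Laurent polynomials in the `x i` and `y`.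
Compare Laurent monomials by their exponents of `y` first. Since `Q` is monic, the leading exponents
of the elements of the ring form the semigroup generated by those of the `x i`, `y` and
`z = y ^ r * ∏ i, x i ^ (-m i) + ⋯`. A derivation extends to the Laurent polynomials, where it has
the form `T^γ ↦ T^γ * E γ` with `E` additive. If it is locally nilpotent and nonzero, the leading
term of `E` yields a Demazure root of the semigroup whose height function vanishes on the leading
exponents of the elements of the kernel. As `r ≥ 2` and all `m i ≥ 2`, the height of every `x i` is
zero, so that the height is a multiple of the exponent of `y` and the kernel consists of polynomials
in the `x i`.

Conversely, a locally nilpotent derivation whose kernel is contained in a subalgebra `A` kills `A`,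
unless the whole ring is algebraic over `A`; but `y` is transcendental over the polynomials in the
`x i`. Hence every nonzero locally nilpotent derivation has the same kernel, and
`(∏ i, x i ^ m i) ∂/∂y + (∂Q/∂y) ∂/∂z` is one.
-/

namespace MakarLimanov

/-! ### Locally nilpotent derivations -/

section LocallyNilpotent

variable {k B : Type*} [CommRing k] [CommRing B] [Algebra k B] {D : Derivation k B B}

/-- A derivation is locally nilpotent if every element is killed by some iterate of it. -/
def IsLocallyNilpotent (D : Derivation k B B) : Prop :=
  ∀ b, ∃ n : ℕ, (⇑D)^[n] b = 0

variable (k B) in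
/-- The Makar-Limanov invariant of a `k`-algebra: the elements killed by every locally nilpotent
`k`-derivation. -/
def makarLimanovInvariant : Subalgebra k B where
  carrier := {b | ∀ D : Derivation k B B, IsLocallyNilpotent D → D b = 0}
  mul_mem' ha hb D hD := by simp [ha D hD, hb D hD]
  add_mem' ha hb D hD := by simp [ha D hD, hb D hD]
  algebraMap_mem' c D _ := D.map_algebraMap c

theorem iterate_eq_zero_of_le {n l : ℕ} (h : n ≤ l) {b : B} (hb : (⇑D)^[n] b = 0) :
    (⇑D)^[l] b = 0 := by
  rw [← Nat.sub_add_cancel h, Function.iterate_add_apply, hb, iterate_map_zero]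

theorem iterate_mul_eq_zero {a b : B} {p q s : ℕ} (hs : p + q ≤ s)
    (ha : (⇑D)^[p] a = 0) (hb : (⇑D)^[q] b = 0) : (⇑D)^[s] (a * b) = 0 := by
  induction s generalizing a b p q with
  | zero =>
    obtain rfl : p = 0 := by lia
    simp_all
  | succ s ih =>
    have hDa : (⇑D)^[p] (D a) = 0 := by
      rw [← Function.iterate_succ_apply, Function.iterate_succ_apply', ha, map_zero]
    have hDb : (⇑D)^[q] (D b) = 0 := by
      rw [← Function.iterate_succ_apply, Function.iterate_succ_apply', hb, map_zero]
    rw [Function.iterate_succ_apply, D.leibniz, smul_eq_mul, smul_eq_mul, iterate_map_add]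
    rcases p with _ | p
    · obtain rfl : a = 0 := ha
      simp
    rcases q with _ | q
    · obtain rfl : b = 0 := hb
      simp
    rw [ih (p := p + 1) (q := q) (by lia) ha hb, ih (p := q + 1) (q := p) (by lia) hb ha, add_zero]

/-- The elements on which the derivation `D` is nilpotent. -/
def nilpotentSubalgebra (D : Derivation k B B) : Subalgebra k B where
  carrier := {b | ∃ n : ℕ, (⇑D)^[n] b = 0}
  mul_mem' := fun ⟨_, ha⟩ ⟨_, hb⟩ => ⟨_, iterate_mul_eq_zero le_rfl ha hb⟩
  add_mem' := fun ⟨p, ha⟩ ⟨q, hb⟩ => ⟨p + q, by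
    rw [iterate_map_add, iterate_eq_zero_of_le (Nat.le_add_right p q) ha,
      iterate_eq_zero_of_le (Nat.le_add_left q p) hb, add_zero]⟩
  algebraMap_mem' c := ⟨1, D.map_algebraMap c⟩

theorem mem_nilpotentSubalgebra_of_map_mem {b : B} (hb : D b ∈ nilpotentSubalgebra D) :
    b ∈ nilpotentSubalgebra D :=
  let ⟨n, hn⟩ := hb
  ⟨n + 1, hn⟩

theorem mem_nilpotentSubalgebra_of_map_eq_zero {b : B} (hb : D b = 0) :
    b ∈ nilpotentSubalgebra D :=
  ⟨1, hb⟩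

theorem isLocallyNilpotent_iff : IsLocallyNilpotent D ↔ nilpotentSubalgebra D = ⊤ :=
  (Algebra.eq_top_iff (S := nilpotentSubalgebra D)).symm

theorem exists_iterate_ne_zero_and_iterate_succ_eq_zero (hD : IsLocallyNilpotent D) {b : B}
    (hb : b ≠ 0) : ∃ n : ℕ, (⇑D)^[n] b ≠ 0 ∧ (⇑D)^[n + 1] b = 0 := by
  classical
  have hpos : Nat.find (hD b) ≠ 0 := fun h => hb ((Nat.find_eq_zero (hD b)).1 h)
  obtain ⟨n, hn⟩ := Nat.exists_eq_succ_of_ne_zero hpos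
  have hspec := Nat.find_spec (hD b)
  rw [hn] at hspec
  exact ⟨n, Nat.find_min (hD b) (by lia), hspec⟩

theorem iterate_mul_pow {p c : B} (hp : D (D p) = 0) (hc : D c = 0) (n : ℕ) :
    (⇑D)^[n] (c * p ^ n) = n.factorial * D p ^ n * c := by
  induction n generalizing c with
  | zero => simp
  | succ n ih =>
    have hc' : D ((n + 1 : ℕ) * D p * c) = 0 := by simp [hp, hc]
    have hD : D (c * p ^ (n + 1)) = (n + 1 : ℕ) * D p * c * p ^ n := by
      simp only [D.leibniz, D.leibniz_pow, hc, smul_eq_mul, nsmul_eq_mul, mul_zero, add_zero,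
        Nat.add_sub_cancel]
      ring
    rw [Function.iterate_succ_apply, hD, ih hc', Nat.factorial_succ]
    push_cast
    ring

theorem iterate_mul_of_map_eq_zero {c : B} (hc : D c = 0) (n : ℕ) (b : B) :
    (⇑D)^[n] (c * b) = c * (⇑D)^[n] b := by
  induction n generalizing b with
  | zero => rfl
  | succ n ih => simp [hc, ih]

end LocallyNilpotent

section ChainRule

variable {k B S : Type*} [CommRing k] [CommRing B] [Algebra k B] [CommRing S]
  {D : Derivation k B B} {f : S →+* B}

theorem derivation_eval₂_of_map_eq_zero (hf : ∀ a, D (f a) = 0) (y : B) (P : Polynomial S) :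
    D (P.eval₂ f y) = P.derivative.eval₂ f y * D y := by
  induction P using Polynomial.induction_on' with
  | add P P' h h' => simp only [map_add, Polynomial.eval₂_add, h, h', add_mul]
  | monomial n a =>
    simp only [Polynomial.eval₂_monomial, Polynomial.derivative_monomial, map_mul, map_natCast,
      D.leibniz, D.leibniz_pow, hf, smul_eq_mul, nsmul_eq_mul]
    ring

theorem transcendental_of_map_ne_zero [IsDomain B] [CharZero B] {A : Subalgebra k B}
    (hA : ∀ a ∈ A, D a = 0) {y : B} (hy : D y ≠ 0) : Transcendental A y := by
  rintro ⟨P, hP, hPy⟩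
  induction h : P.natDegree using Nat.strong_induction_on generalizing P with
  | _ n ih =>
    have hD := derivation_eval₂_of_map_eq_zero (f := algebraMap A B) (fun a => hA a a.2) y P
    rw [← Polynomial.aeval_def, hPy, map_zero, zero_eq_mul, or_iff_left hy] at hD
    rcases Nat.eq_zero_or_pos P.natDegree with hP₀ | hP₀
    · rw [Polynomial.eq_C_of_natDegree_eq_zero hP₀] at hP hPy
      simp_all
    · exact ih _ (h ▸ Polynomial.natDegree_derivative_lt hP₀.ne') _
        (fun hP' => hP₀.ne' (Polynomial.derivative_eq_zero.1 hP')) hD rfl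

end ChainRule

section Kernel

open scoped Polynomial

variable {k B : Type*} [CommRing k] [CommRing B] [Algebra k B] {D : Derivation k B B}

theorem iterate_factorial_mul_pow_mul_sub {p : B} (hp : D (D p) = 0) {n : ℕ} {b : B}
    (hb : (⇑D)^[n + 1] b = 0) :
    (⇑D)^[n] (n.factorial * D p ^ n * b - (⇑D)^[n] b * p ^ n) = 0 := by
  rw [Function.iterate_succ_apply'] at hb
  rw [iterate_map_sub, iterate_mul_pow hp hb, iterate_mul_of_map_eq_zero (by simp [hp]), sub_self]

variable [IsDomain B] [CharZero B] {A : Subalgebra k B}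

theorem factorial_mul_pow_ne_zero {p : B} (hp : p ≠ 0) (n : ℕ) :
    (n.factorial * p ^ n : B) ≠ 0 :=
  mul_ne_zero (Nat.cast_ne_zero.2 n.factorial_ne_zero) (pow_ne_zero n hp)

/-- The expansion of `b` in powers of the local slice `p`, up to a factor in the kernel. -/
theorem exists_aeval_eq_mul (hA : ∀ b, D b = 0 → b ∈ A) {p : B} (hp : D (D p) = 0)
    (hp₀ : D p ≠ 0) {n : ℕ} {b : B} (hb : (⇑D)^[n] b = 0) :
    ∃ s ≠ 0, D s = 0 ∧ ∃ P : A[X], P.degree < n ∧ Polynomial.aeval p P = s * b := by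
  induction n generalizing b with
  | zero => exact ⟨1, one_ne_zero, D.map_one_eq_zero, 0, by simp, by simp_all⟩
  | succ n ih =>
    obtain ⟨s, hs, hDs, P, hP, hPb⟩ := ih (iterate_factorial_mul_pow_mul_sub hp hb)
    rw [Function.iterate_succ_apply'] at hb
    refine ⟨s * (n.factorial * D p ^ n), mul_ne_zero hs (factorial_mul_pow_ne_zero hp₀ n),
      by simp [hDs, hp], P + Polynomial.monomial n (⟨s, hA _ hDs⟩ * ⟨_, hA _ hb⟩), ?_, ?_⟩
    · have hn : (n : WithBot ℕ) < (n + 1 : ℕ) := by exact_mod_cast n.lt_succ_self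
      exact (Polynomial.degree_add_le _ _).trans_lt
        (max_lt (hP.trans hn) ((Polynomial.degree_monomial_le _ _).trans_lt hn))
    · rw [map_add, hPb, Polynomial.aeval_monomial, map_mul, Subalgebra.algebraMap_mk,
        Subalgebra.algebraMap_mk, Algebra.algebraMap_self_apply, Algebra.algebraMap_self_apply]
      ring

theorem isAlgebraic_of_map_ne_zero (hA : ∀ b, D b = 0 → b ∈ A) {p : B} (hp : D (D p) = 0)
    (hp₀ : D p ≠ 0) (hD : IsLocallyNilpotent D) {a : B} (ha : a ∈ A) (hDa : D a ≠ 0) :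
    IsAlgebraic A p := by
  -- A multiple of `a` is a polynomial of degree `n > 0` in `p`; as `a ∈ A`, this is an equation
  -- for `p` over `A`.
  obtain ⟨n, hn, hn₁⟩ := exists_iterate_ne_zero_and_iterate_succ_eq_zero hD
    (b := a) (by rintro rfl; simp at hDa)
  have hn₀ : 0 < n := Nat.pos_of_ne_zero fun h => hDa (by subst h; exact hn₁)
  obtain ⟨s, hs, hDs, P, hP, hPa⟩ :=
    exists_aeval_eq_mul hA hp hp₀ (iterate_factorial_mul_pow_mul_sub hp hn₁)
  rw [Function.iterate_succ_apply'] at hn₁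
  let c : A := ⟨s, hA _ hDs⟩ * ⟨_, hA _ hn₁⟩
  let d : A := ⟨s, hA _ hDs⟩ * ⟨n.factorial * D p ^ n, hA _ (by simp [hp])⟩ * ⟨a, ha⟩
  refine ⟨P + Polynomial.monomial n c - Polynomial.C d, fun h => mul_ne_zero hs hn ?_, ?_⟩
  · have := congrArg (Polynomial.coeff · n) h
    simp only [Polynomial.coeff_sub, Polynomial.coeff_add, Polynomial.coeff_monomial_same,
      Polynomial.coeff_eq_zero_of_degree_lt hP, Polynomial.coeff_C_of_ne_zero hn₀.ne',
      Polynomial.coeff_zero, zero_add, sub_zero] at this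
    exact congrArg (algebraMap A B) this
  · simp only [c, d, map_sub, map_add, hPa, Polynomial.aeval_monomial, Polynomial.aeval_C, map_mul,
      Subalgebra.algebraMap_mk, Algebra.algebraMap_self_apply]
    ring

theorem isAlgebraic_of_kernel_le_of_map_ne_zero (hD : IsLocallyNilpotent D)
    (hA : ∀ b, D b = 0 → b ∈ A) {a : B} (ha : a ∈ A) (hDa : D a ≠ 0) (b : B) :
    IsAlgebraic A b := by
  obtain ⟨n, hn, hn₁⟩ := exists_iterate_ne_zero_and_iterate_succ_eq_zero hD hDa
  rw [← Function.iterate_succ_apply, Function.iterate_succ_apply'] at hn hn₁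
  rw [Function.iterate_succ_apply'] at hn₁
  have hp := isAlgebraic_of_map_ne_zero hA hn₁ hn hD ha hDa
  obtain ⟨l, hl⟩ := hD b
  obtain ⟨s, hs, hDs, P, -, hPb⟩ := exists_aeval_eq_mul hA hn₁ hn hl
  refine .of_mul (mem_nonZeroDivisors_of_ne_zero hs) (isAlgebraic_algebraMap (⟨s, hA s hDs⟩ : A)) ?_
  rw [← hPb]
  exact Algebra.isAlgebraic_adjoin_singleton_iff.2 hp _ (Polynomial.aeval_mem_adjoin_singleton A _)

theorem map_eq_zero_iff_mem_of_transcendental (hD : IsLocallyNilpotent D)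
    (hA : ∀ b, D b = 0 → b ∈ A) {y : B} (hy : Transcendental A y) {b : B} : D b = 0 ↔ b ∈ A :=
  ⟨hA b, fun hb => by_contra fun hDb =>
    hy (isAlgebraic_of_kernel_le_of_map_ne_zero hD hA hb hDb y)⟩

end Kernel

/-! ### Leading terms and derivations of group algebras -/

open scoped AddMonoidAlgebra

open AddMonoidAlgebra (single)

section LeadingTerm

variable {k Γ : Type*} [CommRing k] [LinearOrder Γ]

/-- `f = c T^γ + (terms of exponent < γ)`. The coefficient `c` may vanish, which makes this
predicate stable under sums and products. -/
structure HasLeadingTerm (f : k[Γ]) (γ : Γ) (c : k) : Prop where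
  coeff_eq_zero_of_lt : ∀ g, γ < g → f.coeff g = 0
  coeff_eq : f.coeff γ = c

theorem hasLeadingTerm_single (γ : Γ) (c : k) : HasLeadingTerm (single γ c) γ c where
  coeff_eq_zero_of_lt g hg := by simp [hg.ne]
  coeff_eq := by simp

namespace HasLeadingTerm

variable {f g : k[Γ]} {γ δ : Γ} {c d : k}

theorem of_lt (hf : HasLeadingTerm f γ c) (h : γ < δ) : HasLeadingTerm f δ 0 :=
  ⟨fun _ hg => hf.coeff_eq_zero_of_lt _ (h.trans hg), hf.coeff_eq_zero_of_lt _ h⟩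

theorem eq (hf : HasLeadingTerm f γ c) (hc : c ≠ 0) (hf' : HasLeadingTerm f δ d) (hd : d ≠ 0) :
    γ = δ := by
  rcases lt_trichotomy γ δ with h | h | h
  · exact absurd (hf'.coeff_eq.symm.trans (hf.of_lt h).coeff_eq) hd
  · exact h
  · exact absurd (hf.coeff_eq.symm.trans (hf'.of_lt h).coeff_eq) hc

theorem ne_zero (hf : HasLeadingTerm f γ c) (hc : c ≠ 0) : f ≠ 0 := by
  rintro rfl
  exact hc (hf.coeff_eq.symm.trans (by simp))

theorem add (hf : HasLeadingTerm f γ c) (hg : HasLeadingTerm g γ d) :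
    HasLeadingTerm (f + g) γ (c + d) where
  coeff_eq_zero_of_lt x hx := by
    simp [hf.coeff_eq_zero_of_lt x hx, hg.coeff_eq_zero_of_lt x hx]
  coeff_eq := by simp [hf.coeff_eq, hg.coeff_eq]

theorem smul (hf : HasLeadingTerm f γ c) (a : k) : HasLeadingTerm (a • f) γ (a * c) where
  coeff_eq_zero_of_lt x hx := by simp [hf.coeff_eq_zero_of_lt x hx]
  coeff_eq := by simp [hf.coeff_eq]

theorem sum {ι : Type*} {s : Finset ι} {f : ι → k[Γ]} {c : ι → k}
    (h : ∀ i ∈ s, HasLeadingTerm (f i) γ (c i)) :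
    HasLeadingTerm (∑ i ∈ s, f i) γ (∑ i ∈ s, c i) where
  coeff_eq_zero_of_lt x hx := by
    rw [AddMonoidAlgebra.coeff_sum, Finsupp.finsetSum_apply]
    exact Finset.sum_eq_zero fun i hi => (h i hi).coeff_eq_zero_of_lt x hx
  coeff_eq := by
    rw [AddMonoidAlgebra.coeff_sum, Finsupp.finsetSum_apply]
    exact Finset.sum_congr rfl fun i hi => (h i hi).coeff_eq

theorem linearCombination {ι : Type*} {e : ι → k[Γ]} {w : ι → Γ} (hw : Function.Injective w)
    (he : ∀ i, HasLeadingTerm (e i) (w i) 1) {l : ι →₀ k} {i : ι}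
    (hi : ∀ j ∈ l.support, w j ≤ w i) :
    HasLeadingTerm (Finsupp.linearCombination k e l) (w i) (l i) := by
  classical
  have hterm : ∀ j ∈ l.support, HasLeadingTerm (l j • e j) (w i) (if j = i then l i else 0) := by
    intro j hj
    split_ifs with h
    · simpa [h] using (he i).smul (l i)
    · exact ((he j).smul (l j)).of_lt ((hi j hj).lt_of_ne (hw.ne h))
  have := HasLeadingTerm.sum hterm
  rw [Finset.sum_ite_eq', ite_eq_left_iff.2 fun h => (Finsupp.notMem_support_iff.1 h).symm] at this
  exact this

variable [AddCommGroup Γ]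

theorem one : HasLeadingTerm (1 : k[Γ]) 0 1 :=
  hasLeadingTerm_single 0 1

variable [IsOrderedAddMonoid Γ]

theorem sum_single_mul (hf : HasLeadingTerm f γ c) {F : Γ → k[Γ]} {e : Γ → k}
    (hF : ∀ h, HasLeadingTerm (F h) δ (e h)) :
    HasLeadingTerm (f.coeff.sum fun h r => single h r * F h) (γ + δ) (c * e γ) := by
  have hcoeff (x : Γ) : (f.coeff.sum fun h r => single h r * F h).coeff x =
      ∑ h ∈ f.coeff.support, f.coeff h * (F h).coeff (-h + x) := by
    simp [Finsupp.sum, AddMonoidAlgebra.coeff_single_mul_apply]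
  have hsupp : ∀ h ∈ f.coeff.support, h ≤ γ := fun h hh =>
    not_lt.1 fun hlt => Finsupp.mem_support_iff.1 hh (hf.coeff_eq_zero_of_lt h hlt)
  refine ⟨fun x hx => ?_, ?_⟩
  · rw [hcoeff]
    refine Finset.sum_eq_zero fun h hh => ?_
    rw [(hF h).coeff_eq_zero_of_lt, mul_zero]
    exact lt_neg_add_iff_add_lt.2 ((add_le_add_left (hsupp h hh) δ).trans_lt hx)
  · rw [hcoeff, Finset.sum_eq_single γ, hf.coeff_eq, neg_add_cancel_left, (hF γ).coeff_eq]
    · intro h hh hne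
      rw [(hF h).coeff_eq_zero_of_lt, mul_zero]
      exact lt_neg_add_iff_add_lt.2 (add_lt_add_left ((hsupp h hh).lt_of_ne hne) δ)
    · intro hγ
      rw [Finsupp.notMem_support_iff.1 hγ, zero_mul]

theorem mul (hf : HasLeadingTerm f γ c) (hg : HasLeadingTerm g δ d) :
    HasLeadingTerm (f * g) (γ + δ) (c * d) := by
  have h := hf.sum_single_mul fun _ => hg
  rwa [← Finsupp.sum_mul, AddMonoidAlgebra.sum_coeff_single] at h

theorem pow (hf : HasLeadingTerm f γ 1) (n : ℕ) : HasLeadingTerm (f ^ n) (n • γ) 1 := by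
  induction n with
  | zero => simpa using one
  | succ n ih => simpa [pow_succ, succ_nsmul] using ih.mul hf

theorem prod {ι : Type*} {s : Finset ι} {f : ι → k[Γ]} {γ : ι → Γ}
    (h : ∀ i ∈ s, HasLeadingTerm (f i) (γ i) 1) :
    HasLeadingTerm (∏ i ∈ s, f i) (∑ i ∈ s, γ i) 1 := by
  classical
  induction s using Finset.induction_on with
  | empty => simpa using one
  | insert i s hi ih =>
    rw [Finset.forall_mem_insert] at h
    simpa [hi] using h.1.mul (ih h.2)

end HasLeadingTerm

theorem exists_hasLeadingTerm_linearCombination {ι : Type*} {e : ι → k[Γ]} {w : ι → Γ}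
    (hw : Function.Injective w) (he : ∀ i, HasLeadingTerm (e i) (w i) 1) {l : ι →₀ k}
    (hl : l ≠ 0) :
    ∃ i ∈ l.support, (∀ j ∈ l.support, w j ≤ w i) ∧
      HasLeadingTerm (Finsupp.linearCombination k e l) (w i) (l i) := by
  obtain ⟨i, hi, hmax⟩ := l.support.exists_max_image w (Finsupp.support_nonempty_iff.2 hl)
  exact ⟨i, hi, hmax, .linearCombination hw he hmax⟩

end LeadingTerm

section LogDerivation

variable {k Γ : Type*} [CommRing k] [AddCommGroup Γ]

/-- The derivation of the group algebra whose logarithmic derivative on `T^γ` is `E γ`, that is,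
`T^γ ↦ T^γ * E γ`. -/
noncomputable def logDerivation (E : Γ →+ k[Γ]) : Derivation k k[Γ] k[Γ] :=
  let L : k[Γ] →ₗ[k] k[Γ] := Finsupp.linearCombination k (fun γ => single γ 1 * E γ) ∘ₗ
    (AddMonoidAlgebra.coeffLinearEquiv k).toLinearMap
  have hL (γ : Γ) (c : k) : L (single γ c) = single γ c * E γ := by simp [L, ← smul_mul_assoc]
  .mk' L fun f g => by
    induction f using AddMonoidAlgebra.induction_linear with
    | zero => simp
    | add f₁ f₂ h₁ h₂ => simp only [add_mul, map_add, h₁, h₂, add_smul, smul_add]; abel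
    | single γ c =>
      induction g using AddMonoidAlgebra.induction_linear with
      | zero => simp
      | add g₁ g₂ h₁ h₂ => simp only [mul_add, map_add, h₁, h₂, add_smul, smul_add]; abel
      | single δ d =>
        rw [AddMonoidAlgebra.single_mul_single, hL, hL, hL,
          ← AddMonoidAlgebra.single_mul_single, map_add, smul_eq_mul, smul_eq_mul]
        ring

theorem logDerivation_apply (E : Γ →+ k[Γ]) (f : k[Γ]) :
    logDerivation E f = f.coeff.sum fun γ c => single γ c * E γ := by
  simp [logDerivation, Finsupp.linearCombination_apply, ← smul_mul_assoc]

theorem logDerivation_single (E : Γ →+ k[Γ]) (γ : Γ) :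
    logDerivation E (single γ 1) = single γ 1 * E γ := by
  simp [logDerivation_apply]

end LogDerivation

theorem HasLeadingTerm.logDerivation {k Γ : Type*} [CommRing k] [AddCommGroup Γ] [LinearOrder Γ]
    [IsOrderedAddMonoid Γ] {f : k[Γ]} {γ δ : Γ} {c : k} (hf : HasLeadingTerm f γ c)
    {E : Γ →+ k[Γ]} {e : Γ →+ k} (hE : ∀ γ, HasLeadingTerm (E γ) δ (e γ)) :
    HasLeadingTerm (logDerivation E f) (γ + δ) (c * e γ) := by
  rw [logDerivation_apply]
  exact hf.sum_single_mul hE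

theorem exists_forall_hasLeadingTerm {k Γ : Type*} [CommRing k] [AddCommGroup Γ] [LinearOrder Γ]
    [AddGroup.FG Γ] {E : Γ →+ k[Γ]} (hE : E ≠ 0) :
    ∃ δ, ∃ e : Γ →+ k, e ≠ 0 ∧ ∀ γ, HasLeadingTerm (E γ) δ (e γ) := by
  obtain ⟨G, hG⟩ := AddGroup.fg_def.1 ‹AddGroup.FG Γ›
  let T := G.biUnion fun g => (E g).coeff.support
  have hT : T.Nonempty := by
    by_contra hempty
    refine hE (AddMonoidHom.eq_of_eqOn_dense hG fun g hg => ?_)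
    rw [Finset.biUnion_nonempty] at hempty
    simpa using fun h => hempty ⟨g, hg, h⟩
  let coeffHom (x : Γ) : Γ →+ k :=
    (Finsupp.applyAddHom x).comp (AddMonoidAlgebra.coeffAddEquiv.toAddMonoidHom.comp E)
  refine ⟨T.max' hT, coeffHom (T.max' hT), fun h => ?_, fun γ => ⟨fun x hx => ?_, rfl⟩⟩
  · obtain ⟨g, -, hg⟩ := Finset.mem_biUnion.1 (T.max'_mem hT)
    exact Finsupp.mem_support_iff.1 hg (DFunLike.congr_fun h g)
  · refine DFunLike.congr_fun (AddMonoidHom.eq_of_eqOn_dense hG (f := coeffHom x) (g := 0)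
      fun g hg => ?_) γ
    exact Finsupp.notMem_support_iff.1 fun hmem =>
      hx.not_ge (T.le_max' x (Finset.mem_biUnion.2 ⟨g, hg, hmem⟩))

section Equalizer

variable {k B C : Type*} [CommRing k] [CommRing B] [CommRing C] [Algebra k B] [Algebra k C]

/-- The elements of `B` at which the derivations `D` of `B` and `D'` of `C` are compatible
with the homomorphism `φ : B → C`. -/
def derivationEqualizer (φ : B →ₐ[k] C) (D : Derivation k B B) (D' : Derivation k C C) :
    Subalgebra k B where
  carrier := {b | D' (φ b) = φ (D b)}
  mul_mem' ha hb := by simp_all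
  add_mem' ha hb := by simp_all
  algebraMap_mem' c := by simp

theorem mem_derivationEqualizer_of_mul_mem [NoZeroDivisors C] {φ : B →ₐ[k] C}
    {D : Derivation k B B} {D' : Derivation k C C} {a b : B} (ha : φ a ≠ 0)
    (haD : a ∈ derivationEqualizer φ D D') (hab : a * b ∈ derivationEqualizer φ D D') :
    b ∈ derivationEqualizer φ D D' := by
  change D' (φ a) = φ (D a) at haD
  change D' (φ (a * b)) = φ (D (a * b)) at hab
  simp only [map_mul, D'.leibniz, D.leibniz, map_add, smul_eq_mul, haD, add_left_inj] at hab
  exact mul_left_cancel₀ ha hab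

end Equalizer

/-! ### Demazure roots -/

/-- `δ` is a Demazure root of the set of exponents `S`, with associated one-parameter subgroup
`ρ`: walking from `s ∈ S` in the direction `δ`, the height `ρ` decreases by one at each step and
the walk stays in `S` until the height reaches zero. -/
structure IsDemazureRoot {Γ : Type*} [AddCommGroup Γ] (S : Set Γ) (δ : Γ) (ρ : Γ →+ ℤ) :
    Prop where
  map_root : ρ δ = -1
  nonneg : ∀ s ∈ S, 0 ≤ ρ s
  add_nsmul_mem : ∀ s ∈ S, ∀ l : ℕ, l ≤ ρ s → s + l • δ ∈ S

section Root

variable {V Γ : Type*} [AddCommGroup V] [IsAddTorsionFree V] [AddCommGroup Γ]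

theorem exists_addMonoidHom_int_of_forall_mem_zmultiples {e : Γ →+ V} {v : V} (hv : v ≠ 0)
    (he : ∀ γ, e γ ∈ AddSubgroup.zmultiples v) : ∃ ρ : Γ →+ ℤ, ∀ γ, ρ γ • v = e γ := by
  choose ρ hρ using fun γ => AddSubgroup.mem_zmultiples_iff.1 (he γ)
  refine ⟨.mk' ρ fun a b => smul_left_injective ℤ hv ?_, hρ⟩
  simp only [add_zsmul, hρ, map_add]

theorem exists_isDemazureRoot_of_chains {e : Γ →+ V} (he : e ≠ 0) {S : Set Γ}
    (hS : AddSubgroup.closure S = ⊤) {δ : Γ}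
    (hchain : ∀ s ∈ S, ∃ n : ℕ, e (s + n • δ) = 0 ∧ ∀ l ≤ n, s + l • δ ∈ S) :
    ∃ ρ : Γ →+ ℤ, IsDemazureRoot S δ ρ ∧ ∀ γ, e γ = 0 → ρ γ = 0 := by
  have hδ : e δ ≠ 0 := fun hδ => he <| AddMonoidHom.eq_of_eqOn_dense hS fun s hs => by
    obtain ⟨n, hn, -⟩ := hchain s hs
    simpa [hδ] using hn
  have hmem : ∀ γ, e γ ∈ AddSubgroup.zmultiples (-e δ) := by
    have : AddSubgroup.closure S ≤ (AddSubgroup.zmultiples (-e δ)).comap e :=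
      (AddSubgroup.closure_le _).2 fun s hs => by
        obtain ⟨n, hn, -⟩ := hchain s hs
        refine AddSubgroup.mem_zmultiples_iff.2 ⟨n, ?_⟩
        rw [map_add, map_nsmul] at hn
        rw [natCast_zsmul, smul_neg, eq_neg_of_add_eq_zero_left hn]
    exact fun γ => this (hS ▸ AddSubgroup.mem_top γ)
  obtain ⟨ρ, hρ⟩ := exists_addMonoidHom_int_of_forall_mem_zmultiples (neg_ne_zero.2 hδ) hmem
  have hzero {γ : Γ} (h : e γ = 0) : ρ γ = 0 :=
    (smul_eq_zero.1 ((hρ γ).trans h)).resolve_right (neg_ne_zero.2 hδ)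
  have hroot : ρ δ = -1 := smul_left_injective ℤ (neg_ne_zero.2 hδ) <| by simp only [hρ]; simp
  have hheight : ∀ s ∈ S, ∃ n : ℕ, ρ s = n ∧ ∀ l ≤ n, s + l • δ ∈ S := fun s hs => by
    obtain ⟨n, hn, hl⟩ := hchain s hs
    have := hzero hn
    rw [map_add, map_nsmul, hroot] at this
    exact ⟨n, by simpa [← sub_eq_add_neg, sub_eq_zero] using this, hl⟩
  refine ⟨ρ, ⟨hroot, fun s hs => ?_, fun s hs l hl => ?_⟩, fun _ => hzero⟩
  all_goals obtain ⟨n, hn, hmem⟩ := hheight s hs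
  · lia
  · exact hmem l (by lia)

end Root

section LeadingExponents

variable {k B Γ : Type*} [CommRing k] [CommRing B] [Algebra k B] [AddCommGroup Γ]
  [LinearOrder Γ] {φ : B →ₐ[k] k[Γ]}

/-- The exponents of the leading terms of the elements of `φ(B)`. -/
def leadingExponents (φ : B →ₐ[k] k[Γ]) : Set Γ :=
  {γ | ∃ b, ∃ c ≠ 0, HasLeadingTerm (φ b) γ c}

variable [IsDomain k] [IsOrderedAddMonoid Γ]

theorem exists_chain_of_mem_leadingExponents {D : Derivation k B B} (hD : IsLocallyNilpotent D)
    {E : Γ →+ k[Γ]} (hDE : ∀ b, logDerivation E (φ b) = φ (D b)) {δ : Γ} {e : Γ →+ k}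
    (hE : ∀ γ, HasLeadingTerm (E γ) δ (e γ)) {s : Γ} (hs : s ∈ leadingExponents φ) :
    ∃ n : ℕ, e (s + n • δ) = 0 ∧ ∀ l ≤ n, s + l • δ ∈ leadingExponents φ := by
  obtain ⟨b, c, hc, hb⟩ := hs
  obtain ⟨N, hN⟩ := hD b
  induction N generalizing b c s with
  | zero => exact absurd (by simp_all) (hb.ne_zero hc)
  | succ N ih =>
    have hs : s ∈ leadingExponents φ := ⟨b, c, hc, hb⟩
    by_cases hes : e s = 0
    · exact ⟨0, by simpa using hes, by simpa using hs⟩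
    · have hDb := hb.logDerivation hE
      rw [hDE] at hDb
      obtain ⟨n, hn, hl⟩ := ih (D b) (c * e s) (mul_ne_zero hc hes) hDb hN
      refine ⟨n + 1, by rwa [succ_nsmul', ← add_assoc], fun l hln => ?_⟩
      rcases l with _ | l
      · simpa using hs
      · rw [succ_nsmul', ← add_assoc]
        exact hl l (by lia)

theorem exists_isDemazureRoot [CharZero k] [AddGroup.FG Γ] (hφ : Function.Injective φ)
    (hgen : AddSubgroup.closure (leadingExponents φ) = ⊤) {D : Derivation k B B}
    (hD : IsLocallyNilpotent D) (hD₀ : D ≠ 0) {E : Γ →+ k[Γ]}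
    (hDE : ∀ b, logDerivation E (φ b) = φ (D b)) :
    ∃ δ ρ, IsDemazureRoot (leadingExponents φ) δ ρ ∧
      ∀ b γ, ∀ c ≠ 0, HasLeadingTerm (φ b) γ c → D b = 0 → ρ γ = 0 := by
  have hE₀ : E ≠ 0 := by
    rintro rfl
    refine hD₀ (Derivation.ext fun b => hφ ?_)
    simp [← hDE, logDerivation_apply]
  obtain ⟨δ, e, he, hE⟩ := exists_forall_hasLeadingTerm hE₀
  obtain ⟨ρ, hρ, hzero⟩ := exists_isDemazureRoot_of_chains he hgen fun s hs =>
    exists_chain_of_mem_leadingExponents hD hDE hE hs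
  refine ⟨δ, ρ, hρ, fun b γ c hc hb hDb => hzero γ ?_⟩
  have hlead := hb.logDerivation hE
  rw [hDE, hDb, map_zero] at hlead
  by_contra hne
  exact hlead.ne_zero (mul_ne_zero hc hne) rfl

end LeadingExponents

/-! ### Exponents of the monomials in `x`, `y`, `z` -/

/-- Exponents of Laurent monomials in `y` and `x i`, `i : σ`. They are compared by their
exponents of `y` first, so that `y ^ r` is the leading monomial of `Q`. -/
def Exponent (σ : Type*) : Type _ :=
  ℤ ×ₗ Lex (σ → ℤ)

namespace Exponent

variable {σ : Type*}

instance : AddCommGroup (Exponent σ) :=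
  inferInstanceAs (AddCommGroup (ℤ ×ₗ Lex (σ → ℤ)))

noncomputable instance [LinearOrder σ] [Finite σ] : LinearOrder (Exponent σ) :=
  inferInstanceAs (LinearOrder (ℤ ×ₗ Lex (σ → ℤ)))

instance [LinearOrder σ] [Finite σ] : IsOrderedAddMonoid (Exponent σ) :=
  inferInstanceAs (IsOrderedAddMonoid (ℤ ×ₗ Lex (σ → ℤ)))

/-- The exponent of `x i` in a Laurent monomial. -/
def xCoord (i : σ) : Exponent σ →+ ℤ :=
  .mk' (fun γ => ofLex (ofLex γ).2 i) fun _ _ => rfl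

/-- The exponent of `y` in a Laurent monomial. -/
def yCoord : Exponent σ →+ ℤ :=
  .mk' (fun γ => (ofLex γ).1) fun _ _ => rfl

@[ext]
theorem ext {γ δ : Exponent σ} (hy : yCoord γ = yCoord δ) (hx : ∀ i, xCoord i γ = xCoord i δ) :
    γ = δ :=
  ofLex.injective (Prod.ext hy (ofLex.injective (funext hx)))

/-- The exponent of the monomial `y`. -/
def y : Exponent σ :=
  toLex (1, 0)

@[simp] theorem yCoord_y : yCoord (y : Exponent σ) = 1 := rfl

@[simp] theorem xCoord_y (i : σ) : xCoord i y = 0 := rfl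

section Order

variable [LinearOrder σ] [Finite σ]

theorem lt_of_yCoord_lt {γ δ : Exponent σ} (h : yCoord γ < yCoord δ) : γ < δ :=
  Prod.Lex.lt_iff.2 (.inl h)

theorem yCoord_mono : Monotone (yCoord : Exponent σ → ℤ) := fun _ _ h =>
  not_lt.1 fun hlt => h.not_gt (lt_of_yCoord_lt hlt)

end Order

variable [DecidableEq σ]

/-- The exponent of the monomial `x i`. -/
def x (i : σ) : Exponent σ :=
  toLex (0, toLex (Pi.single i 1))

@[simp] theorem yCoord_x (i : σ) : yCoord (x i) = 0 := rfl

@[simp] theorem xCoord_x (i j : σ) : xCoord j (x i) = if j = i then 1 else 0 :=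
  Pi.single_apply i 1 j

theorem yCoord_zsmul_add_sum_xCoord_zsmul [Fintype σ] (γ : Exponent σ) :
    yCoord γ • y + ∑ i, xCoord i γ • x i = γ := by
  ext <;> simp

theorem exists_addMonoidHom [Finite σ] {V : Type*} [AddCommGroup V] (v : V) (w : σ → V) :
    ∃ E : Exponent σ →+ V, E y = v ∧ ∀ i, E (x i) = w i := by
  have := Fintype.ofFinite σ
  exact ⟨.mk' (fun γ => yCoord γ • v + ∑ i, xCoord i γ • w i) fun γ δ => by
    simp only [map_add, add_zsmul, Finset.sum_add_distrib]; abel, by simp, by simp⟩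

theorem closure_eq_top [Finite σ] {S : Set (Exponent σ)} (hy : y ∈ S) (hx : ∀ i, x i ∈ S) :
    AddSubgroup.closure S = ⊤ := by
  have := Fintype.ofFinite σ
  refine (AddSubgroup.eq_top_iff' _).2 fun γ => ?_
  rw [← yCoord_zsmul_add_sum_xCoord_zsmul γ]
  exact add_mem (zsmul_mem (AddSubgroup.subset_closure hy) _)
    (sum_mem fun i _ => zsmul_mem (AddSubgroup.subset_closure (hx i)) _)

instance {σ : Type*} [Finite σ] : AddGroup.FG (Exponent σ) := by
  classical
  refine AddGroup.fg_iff.2 ⟨insert y (Set.range x), ?_, (Set.finite_range x).insert y⟩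
  exact closure_eq_top (Set.mem_insert ..) fun i => Set.mem_insert_of_mem _ (Set.mem_range_self i)

variable [Fintype σ] (r : ℕ) (m : σ → ℕ)

/-- The exponent of `y ^ r * ∏ i, x i ^ (-m i)`, the leading monomial of
`z = Q(x, y) * ∏ i, x i ^ (-m i)`. -/
def z : Exponent σ :=
  r • y - ∑ i, m i • x i

@[simp] theorem yCoord_z : yCoord (z r m) = r := by simp [z]

@[simp] theorem xCoord_z (i : σ) : xCoord i (z r m) = -m i := by simp [z]

/-- The exponent of the leading term of the monomial `x ^ a * y ^ j * z ^ c`. -/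
def ofMonomial (a : σ → ℕ) (j c : ℕ) : Exponent σ :=
  ∑ i, a i • x i + j • y + c • z r m

variable {r m}

theorem map_ofMonomial {V : Type*} [AddCommGroup V] (ρ : Exponent σ →+ V) (a : σ → ℕ) (j c : ℕ) :
    ρ (ofMonomial r m a j c) = ∑ i, a i • ρ (x i) + j • ρ y + c • ρ (z r m) := by
  simp [ofMonomial]

theorem yCoord_ofMonomial (a : σ → ℕ) (j c : ℕ) : yCoord (ofMonomial r m a j c) = j + r * c := by
  simp [map_ofMonomial, mul_comm]

theorem xCoord_ofMonomial (a : σ → ℕ) (j c : ℕ) (i : σ) :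
    xCoord i (ofMonomial r m a j c) = a i - m i * c := by
  simp [map_ofMonomial, mul_comm, ← sub_eq_add_neg]

variable (r m) in
/-- The exponents of the leading terms of the monomials in `x`, `y` and `z`. -/
def monomials : Set (Exponent σ) :=
  {γ | ∃ a j c, ofMonomial r m a j c = γ}

theorem x_mem_monomials (i : σ) : x i ∈ monomials r m :=
  ⟨Pi.single i 1, 0, 0, by simp [ofMonomial, Pi.single_apply, ite_smul]⟩

theorem y_mem_monomials : y ∈ monomials r m :=
  ⟨0, 1, 0, by simp [ofMonomial]⟩

theorem z_mem_monomials : z r m ∈ monomials r m :=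
  ⟨0, 0, 1, by simp [ofMonomial]⟩

theorem ofMonomial_injective (hr : 0 < r) {a a' : σ → ℕ} {j j' c c' : ℕ} (hj : j < r) (hj' : j' < r)
    (h : ofMonomial r m a j c = ofMonomial r m a' j' c') : a = a' ∧ j = j' ∧ c = c' := by
  have hy : j + r * c = j' + r * c' := by
    have := congrArg yCoord h
    rw [yCoord_ofMonomial, yCoord_ofMonomial] at this
    exact_mod_cast this
  obtain ⟨hj, rfl⟩ : j = j' ∧ c = c' := by
    constructor
    · simpa [Nat.mod_eq_of_lt, hj, hj'] using congrArg (· % r) hy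
    · simpa [Nat.add_mul_div_left, hr, Nat.div_eq_of_lt, hj, hj'] using congrArg (· / r) hy
  refine ⟨funext fun i => ?_, hj, rfl⟩
  have := congrArg (xCoord i) h
  rw [xCoord_ofMonomial, xCoord_ofMonomial] at this
  lia

theorem eq_zero_of_yCoord_ofMonomial_nonpos (hr : 0 < r) {a : σ → ℕ} {j c : ℕ}
    (h : yCoord (ofMonomial r m a j c) ≤ 0) : j = 0 ∧ c = 0 := by
  rw [yCoord_ofMonomial] at h
  have : j + r * c ≤ 0 := by exact_mod_cast h
  simpa [hr.ne'] using this

end Exponent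

namespace IsDemazureRoot

open Exponent

variable {σ : Type*} [Fintype σ] [DecidableEq σ] {r : ℕ} {m : σ → ℕ} {δ : Exponent σ}
  {ρ : Exponent σ →+ ℤ}

theorem map_z : ρ (z r m) = r * ρ y - ∑ i, m i * ρ (x i) := by
  simp [z]

theorem sum_mul_map_x_le (h : IsDemazureRoot (monomials r m) δ ρ) :
    ∑ i, m i * ρ (x i) ≤ r * ρ y := by
  have := h.nonneg _ z_mem_monomials
  rw [map_z] at this
  lia

theorem mul_map_x_le (h : IsDemazureRoot (monomials r m) δ ρ) (i : σ) :
    m i * ρ (x i) ≤ r * ρ y :=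
  (Finset.single_le_sum (f := fun i => (m i : ℤ) * ρ (x i))
    (fun i _ => mul_nonneg (by positivity) (h.nonneg _ (x_mem_monomials i)))
    (Finset.mem_univ i)).trans h.sum_mul_map_x_le

/-- The end point `s + ρ s • δ` of the walk starting at `s` has height zero, so it is the exponent
of a monomial containing neither `y` nor `x i`. -/
theorem exists_end_of_walk (h : IsDemazureRoot (monomials r m) δ ρ) {i : σ} (hx : 0 < ρ (x i))
    (hy : 0 < ρ y) {s : Exponent σ} (hs : s ∈ monomials r m) :
    ∃ c : ℕ, yCoord s + ρ s * yCoord δ = r * c ∧ xCoord i s + ρ s * xCoord i δ = -(m i * c) := by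
  obtain ⟨n, hn⟩ := Int.eq_ofNat_of_zero_le (h.nonneg s hs)
  obtain ⟨a, j, c, heq⟩ := h.add_nsmul_mem s hs n hn.ge
  have hzero : ρ (ofMonomial r m a j c) = 0 := by rw [heq, map_add, map_nsmul, h.map_root, hn]; simp
  rw [map_ofMonomial] at hzero
  have hxs (i : σ) : 0 ≤ a i • ρ (x i) := nsmul_nonneg (h.nonneg _ (x_mem_monomials i)) _
  have hsum : 0 ≤ ∑ i, a i • ρ (x i) := Finset.sum_nonneg fun i _ => hxs i
  have hys : 0 ≤ j • ρ y := nsmul_nonneg hy.le _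
  have hzs : 0 ≤ c • ρ (z r m) := nsmul_nonneg (h.nonneg _ z_mem_monomials) _
  have ha : a i = 0 := by
    have := (Finset.sum_eq_zero_iff_of_nonneg fun i _ => hxs i).1
      (by lia : ∑ i, a i • ρ (x i) = 0) i (Finset.mem_univ i)
    simpa [hx.ne'] using this
  have hj : j = 0 := by simpa [hy.ne'] using (by lia : j • ρ y = 0)
  refine ⟨c, ?_, ?_⟩
  · simpa [yCoord_ofMonomial, hj, hn] using (congrArg yCoord heq).symm
  · simpa [xCoord_ofMonomial, ha, hn] using (congrArg (xCoord i) heq).symm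

theorem exists_map_x_eq_mul_and_map_y_eq_mul (h : IsDemazureRoot (monomials r m) δ ρ) {i : σ}
    (hx : 0 < ρ (x i)) (hy : 0 < ρ y) : ∃ N : ℤ, ρ (x i) = r * N ∧ ρ y = m i * N := by
  obtain ⟨c, hcy, hcx⟩ := h.exists_end_of_walk hx hy (x_mem_monomials i)
  obtain ⟨c', hcy', hcx'⟩ := h.exists_end_of_walk hx hy y_mem_monomials
  simp only [yCoord_x, yCoord_y, xCoord_x, xCoord_y, if_true] at hcy hcx hcy' hcx'
  exact ⟨ρ (x i) * c' - ρ y * c, by linear_combination ρ (x i) * hcy' - ρ y * hcy,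
    by linear_combination ρ y * hcx - ρ (x i) * hcx'⟩

theorem map_ofMonomial_of_map_x_eq_mul (h : IsDemazureRoot (monomials r m) δ ρ)
    (hm : ∀ i, 0 < m i) {i : σ} {N : ℤ} (hx : ρ (x i) = r * N) (hy : ρ y = m i * N)
    (a : σ → ℕ) (j c : ℕ) : ρ (ofMonomial r m a j c) = (a i * r + j * m i) * N := by
  have hx₀ (k : σ) : 0 ≤ m k * ρ (x k) :=
    mul_nonneg (by positivity) (h.nonneg _ (x_mem_monomials k))
  have hsplit : m i * ρ (x i) + ∑ k ∈ Finset.univ.erase i, m k * ρ (x k) = ∑ k, m k * ρ (x k) :=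
    Finset.add_sum_erase _ (fun k => m k * ρ (x k)) (Finset.mem_univ i)
  have hrest : 0 ≤ ∑ k ∈ Finset.univ.erase i, m k * ρ (x k) := Finset.sum_nonneg fun k _ => hx₀ k
  have heq : r * ρ y = m i * ρ (x i) := by rw [hx, hy]; ring
  have hle := h.sum_mul_map_x_le
  have hz : ρ (z r m) = 0 := by
    have := h.nonneg _ z_mem_monomials
    rw [map_z] at this ⊢
    lia
  have hxk (k : σ) (hk : k ≠ i) : ρ (x k) = 0 := by
    have := (Finset.sum_eq_zero_iff_of_nonneg fun k _ => hx₀ k).1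
      (by lia : ∑ k ∈ Finset.univ.erase i, m k * ρ (x k) = 0) k (by simpa using hk)
    simpa [(hm k).ne'] using this
  rw [map_ofMonomial, hz, Finset.sum_eq_single i (fun k _ hk => by rw [hxk k hk, smul_zero])
    (by simp), hx, hy]
  simp only [nsmul_eq_mul]
  ring

theorem map_x_eq_zero (h : IsDemazureRoot (monomials r m) δ ρ) (hr : 2 ≤ r)
    (hm : ∀ i, 2 ≤ m i) (i : σ) : ρ (x i) = 0 := by
  by_contra hne
  have hmi := hm i
  have hx : 0 < ρ (x i) := (h.nonneg _ (x_mem_monomials i)).lt_of_ne' hne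
  have hy : 0 < ρ y := by
    have : 0 < m i * ρ (x i) := by positivity
    exact pos_of_mul_pos_right (this.trans_le (h.mul_map_x_le i)) (by positivity)
  obtain ⟨N, hxN, hyN⟩ := h.exists_map_x_eq_mul_and_map_y_eq_mul hx hy
  -- The last but one point of the walk from `y` has height one.
  obtain ⟨a, j, c, heq⟩ := h.add_nsmul_mem y y_mem_monomials (ρ y - 1).toNat (by lia)
  have hone : ρ (ofMonomial r m a j c) = 1 := by
    rw [heq, map_add, map_nsmul, h.map_root, nsmul_eq_mul]
    lia
  rw [h.map_ofMonomial_of_map_x_eq_mul (fun k => by linarith [hm k]) hxN hyN] at hone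
  have hunit : a i * r + j * m i = 1 := by
    have hcoeff : (0 : ℤ) ≤ a i * r + j * m i := by positivity
    have := Int.eq_one_or_neg_one_of_mul_eq_one hone
    exact_mod_cast this.resolve_right (neg_one_lt_zero.trans_le hcoeff).ne'
  rcases Nat.eq_zero_or_pos (a i) with ha | ha
  · exact absurd (Nat.eq_one_of_mul_eq_one_left (by simpa [ha] using hunit)) (by lia)
  · nlinarith

theorem yCoord_eq_zero_of_map_eq_zero (h : IsDemazureRoot (monomials r m) δ ρ) (hr : 2 ≤ r)
    (hm : ∀ i, 2 ≤ m i) {γ : Exponent σ} (hγ : ρ γ = 0) : yCoord γ = 0 := by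
  have hρ (γ : Exponent σ) : ρ γ = yCoord γ * ρ y := by
    conv_lhs => rw [← yCoord_zsmul_add_sum_xCoord_zsmul γ]
    simp [h.map_x_eq_zero hr hm]
  have hy : ρ y ≠ 0 := fun hy => by simpa [hρ δ, hy] using h.map_root
  simpa [hρ γ, hy] using hγ

end IsDemazureRoot

/-! ### The coordinate ring -/

section CoordinateRing

variable {k σ : Type*} [CommRing k] [Fintype σ]

/-- The polynomial `∏ i, x i ^ m i * z - Q(x, y)`, where the variables are `x i = X (Sum.inl i)`,
`y = X (Sum.inr 0)` and `z = X (Sum.inr 1)`. -/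
noncomputable def definingPolynomial (m : σ → ℕ) (Q : Polynomial (MvPolynomial σ k)) :
    MvPolynomial (σ ⊕ Fin 2) k :=
  (∏ i, X (Sum.inl i) ^ m i) * X (Sum.inr 1) -
    Polynomial.eval₂ (rename (Sum.inl : σ → σ ⊕ Fin 2)).toRingHom (X (Sum.inr 0)) Q

/-- The coordinate ring of the hypersurface `∏ i, x i ^ m i * z = Q(x, y)`. -/
def CoordinateRing (m : σ → ℕ) (Q : Polynomial (MvPolynomial σ k)) : Type _ :=
  MvPolynomial (σ ⊕ Fin 2) k ⧸ Ideal.span {definingPolynomial m Q}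

namespace CoordinateRing

variable (m : σ → ℕ) (Q : Polynomial (MvPolynomial σ k))

noncomputable instance : CommRing (CoordinateRing m Q) :=
  inferInstanceAs (CommRing (_ ⧸ Ideal.span {definingPolynomial m Q}))

noncomputable instance : Algebra k (CoordinateRing m Q) :=
  inferInstanceAs (Algebra k (_ ⧸ Ideal.span {definingPolynomial m Q}))

/-- The quotient map from the polynomial ring to the coordinate ring. -/
noncomputable def mk : MvPolynomial (σ ⊕ Fin 2) k →ₐ[k] CoordinateRing m Q :=
  Ideal.Quotient.mkₐ k (Ideal.span {definingPolynomial m Q})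

/-- The homomorphism from the polynomial ring in the `x i` to the coordinate ring. -/
noncomputable def ofPolynomial : MvPolynomial σ k →ₐ[k] CoordinateRing m Q :=
  (mk m Q).comp (rename Sum.inl)

/-- The coordinate function `x i`. -/
noncomputable def x (i : σ) : CoordinateRing m Q :=
  mk m Q (X (Sum.inl i))

/-- The coordinate function `y`. -/
noncomputable def y : CoordinateRing m Q :=
  mk m Q (X (Sum.inr 0))

/-- The coordinate function `z`. -/
noncomputable def z : CoordinateRing m Q :=
  mk m Q (X (Sum.inr 1))

variable {m Q}

theorem mk_surjective : Function.Surjective (mk m Q) :=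
  Ideal.Quotient.mkₐ_surjective k (Ideal.span {definingPolynomial m Q})

theorem mk_eq_zero_iff {p : MvPolynomial (σ ⊕ Fin 2) k} :
    mk m Q p = 0 ↔ definingPolynomial m Q ∣ p :=
  Ideal.Quotient.eq_zero_iff_dvd ..

theorem ofPolynomial_X (i : σ) : ofPolynomial m Q (X i) = x m Q i := by
  simp [ofPolynomial, x]

theorem mk_eval₂ (P : Polynomial (MvPolynomial σ k)) :
    mk m Q (P.eval₂ (rename (Sum.inl : σ → σ ⊕ Fin 2)).toRingHom (X (Sum.inr 0))) =
      P.eval₂ (ofPolynomial m Q) (y m Q) :=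
  Polynomial.hom_eval₂ P _ (mk m Q).toRingHom _

theorem prod_x_pow_mul_z :
    (∏ i, x m Q i ^ m i) * z m Q = Q.eval₂ (ofPolynomial m Q) (y m Q) := by
  rw [← mk_eval₂, ← sub_eq_zero]
  simp only [x, z, ← map_pow, ← map_prod, ← map_mul, ← map_sub]
  exact mk_eq_zero_iff.2 dvd_rfl

theorem ofPolynomial_prod_X_pow (a : σ → ℕ) :
    ofPolynomial m Q (∏ i, X i ^ a i) = ∏ i, x m Q i ^ a i := by
  simp only [map_prod, map_pow, ofPolynomial_X]

theorem ofPolynomial_mem {S : Subalgebra k (CoordinateRing m Q)} (hx : ∀ i, x m Q i ∈ S)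
    (p : MvPolynomial σ k) : ofPolynomial m Q p ∈ S := by
  induction p using MvPolynomial.induction_on with
  | C c => exact (ofPolynomial m Q).commutes c ▸ S.algebraMap_mem c
  | add p q hp hq => exact map_add (ofPolynomial m Q) p q ▸ S.add_mem hp hq
  | mul_X p i hp => rw [map_mul, ofPolynomial_X]; exact S.mul_mem hp (hx i)

theorem eval₂_mem {S : Subalgebra k (CoordinateRing m Q)} (hx : ∀ i, x m Q i ∈ S)
    (hy : y m Q ∈ S) (P : Polynomial (MvPolynomial σ k)) :
    P.eval₂ (ofPolynomial m Q : MvPolynomial σ k →+* CoordinateRing m Q) (y m Q) ∈ S := by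
  rw [Polynomial.eval₂_eq_sum_range]
  exact sum_mem fun i _ => mul_mem (ofPolynomial_mem hx _) (pow_mem hy i)

theorem subalgebra_eq_top {S : Subalgebra k (CoordinateRing m Q)} (hx : ∀ i, x m Q i ∈ S)
    (hy : y m Q ∈ S) (hz : z m Q ∈ S) : S = ⊤ := by
  refine Algebra.eq_top_iff.2 fun b => ?_
  obtain ⟨p, rfl⟩ := mk_surjective b
  induction p using MvPolynomial.induction_on with
  | C c => exact (mk m Q).commutes c ▸ S.algebraMap_mem c
  | add p q hp hq => exact map_add (mk m Q) p q ▸ S.add_mem hp hq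
  | mul_X p i hp =>
    rw [map_mul]
    refine S.mul_mem hp ?_
    match i with
    | .inl i => exact hx i
    | .inr 0 => exact hy
    | .inr 1 => exact hz

section Lift

variable {C : Type*} [CommRing C] [Algebra k C]

theorem aeval_definingPolynomial (f : σ ⊕ Fin 2 → C) :
    aeval f (definingPolynomial m Q) = (∏ i, f (.inl i) ^ m i) * f (.inr 1) -
      Q.eval₂ (aeval (R := k) fun i => f (.inl i)).toRingHom (f (.inr 0)) := by
  have hcomp : (aeval f).toRingHom.comp (rename (R := k) (Sum.inl : σ → σ ⊕ Fin 2)).toRingHom =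
      (aeval fun i => f (.inl i)).toRingHom :=
    RingHom.ext fun p => aeval_rename ..
  have heval := Polynomial.hom_eval₂ Q (rename (Sum.inl : σ → σ ⊕ Fin 2)).toRingHom
    (aeval f).toRingHom (X (.inr 0))
  rw [hcomp] at heval
  simpa [definingPolynomial] using heval

/-- The homomorphism from the coordinate ring given by a point `f` of the hypersurface. -/
noncomputable def lift (f : σ ⊕ Fin 2 → C) (hf : (∏ i, f (.inl i) ^ m i) * f (.inr 1) =
    Q.eval₂ (aeval (R := k) fun i => f (.inl i)).toRingHom (f (.inr 0))) :
    CoordinateRing m Q →ₐ[k] C :=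
  Ideal.Quotient.liftₐ (Ideal.span {definingPolynomial m Q}) (aeval f) fun p hp => by
    obtain ⟨q, rfl⟩ := Ideal.mem_span_singleton'.1 hp
    rw [map_mul, aeval_definingPolynomial, hf, sub_self, mul_zero]

theorem lift_mk_X (f : σ ⊕ Fin 2 → C) (hf : (∏ i, f (.inl i) ^ m i) * f (.inr 1) =
    Q.eval₂ (aeval (R := k) fun i => f (.inl i)).toRingHom (f (.inr 0))) (i : σ ⊕ Fin 2) :
    lift f hf (mk m Q (X i)) = f i :=
  aeval_X f i

end Lift

section NormalForm

variable (m Q) in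
/-- The monomial `x ^ a * y ^ j * z ^ c`. -/
noncomputable def xyzMonomial (a : σ → ℕ) (j c : ℕ) : CoordinateRing m Q :=
  (∏ i, x m Q i ^ a i) * y m Q ^ j * z m Q ^ c

variable (m Q) in
/-- The span of the monomials `x ^ a * y ^ j * z ^ c` with `j` less than the degree of `Q`. -/
noncomputable def normalForms : Submodule k (CoordinateRing m Q) :=
  Submodule.span k (Set.range fun t : (σ → ℕ) × Fin Q.natDegree × ℕ =>
    xyzMonomial m Q t.1 t.2.1 t.2.2)

theorem ofPolynomial_mul_mem_normalForms_of_lt (p : MvPolynomial σ k) {j : ℕ}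
    (hj : j < Q.natDegree) (c : ℕ) :
    ofPolynomial m Q p * y m Q ^ j * z m Q ^ c ∈ normalForms m Q := by
  induction p using MvPolynomial.induction_on' with
  | monomial a s =>
    rw [monomial_eq, Finsupp.prod_fintype _ _ fun i => pow_zero _, ← smul_eq_C_mul, map_smul,
      ofPolynomial_prod_X_pow, smul_mul_assoc, smul_mul_assoc]
    exact Submodule.smul_mem _ _ (Submodule.subset_span ⟨(a, ⟨j, hj⟩, c), rfl⟩)
  | add p q hp hq =>
    rw [map_add, add_mul, add_mul]
    exact add_mem hp hq

theorem y_pow_natDegree (hQ : Q.Monic) : y m Q ^ Q.natDegree = (∏ i, x m Q i ^ m i) * z m Q -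
    ∑ i ∈ Finset.range Q.natDegree, ofPolynomial m Q (Q.coeff i) * y m Q ^ i := by
  rw [prod_x_pow_mul_z, Polynomial.eval₂_eq_sum_range, Finset.sum_range_succ, hQ.coeff_natDegree]
  simp

theorem ofPolynomial_mul_mem_normalForms (hQ : Q.Monic) (hr : 0 < Q.natDegree)
    (p : MvPolynomial σ k) (j c : ℕ) :
    ofPolynomial m Q p * y m Q ^ j * z m Q ^ c ∈ normalForms m Q := by
  induction j using Nat.strong_induction_on generalizing p c with
  | _ j ih =>
    rcases lt_or_ge j Q.natDegree with hj | hj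
    · exact ofPolynomial_mul_mem_normalForms_of_lt p hj c
    obtain ⟨l, rfl⟩ := Nat.exists_eq_add_of_le' hj
    have hreduce : ofPolynomial m Q p * y m Q ^ (l + Q.natDegree) * z m Q ^ c =
        ofPolynomial m Q (p * ∏ i, X i ^ m i) * y m Q ^ l * z m Q ^ (c + 1) -
          ∑ i ∈ Finset.range Q.natDegree,
            ofPolynomial m Q (p * Q.coeff i) * y m Q ^ (l + i) * z m Q ^ c := by
      rw [pow_add, y_pow_natDegree hQ, mul_sub, mul_sub, sub_mul, Finset.mul_sum, Finset.mul_sum,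
        Finset.sum_mul, map_mul, ofPolynomial_prod_X_pow]
      congr 1
      · ring
      · exact Finset.sum_congr rfl fun i _ => by rw [map_mul]; ring
    rw [hreduce]
    exact sub_mem (ih l (by lia) _ _)
      (sum_mem fun i hi => ih (l + i) (by grind) _ _)

theorem normalForms_eq_top (hQ : Q.Monic) (hr : 0 < Q.natDegree) : normalForms m Q = ⊤ := by
  have hmul (p : MvPolynomial (σ ⊕ Fin 2) k) : ∀ q j c,
      mk m Q p * (ofPolynomial m Q q * y m Q ^ j * z m Q ^ c) ∈ normalForms m Q := by
    induction p using MvPolynomial.induction_on with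
    | C s =>
      intro q j c
      rw [← algebraMap_eq, AlgHom.commutes, ← Algebra.smul_def]
      exact Submodule.smul_mem _ _ (ofPolynomial_mul_mem_normalForms hQ hr q j c)
    | add p p' hp hp' =>
      intro q j c
      rw [map_add, add_mul]
      exact add_mem (hp q j c) (hp' q j c)
    | mul_X p i hp =>
      intro q j c
      rw [map_mul, mul_assoc]
      match i with
      | .inl i =>
        convert hp (q * X i) j c using 2
        rw [map_mul, ofPolynomial_X, x]
        ring
      | .inr 0 =>
        convert hp q (j + 1) c using 2
        rw [pow_succ, y]
        ring
      | .inr 1 =>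
        convert hp q j (c + 1) using 2
        rw [pow_succ, z]
        ring
  refine Submodule.eq_top_iff'.2 fun b => ?_
  obtain ⟨p, rfl⟩ := mk_surjective b
  simpa using hmul p 1 0 0

end NormalForm

end CoordinateRing

end CoordinateRing

/-! ### The embedding into Laurent polynomials -/

section Embedding

variable {k σ : Type*} [CommRing k]

/-- The inclusion of the polynomial ring in the `x i` into the ring of Laurent polynomials. -/
noncomputable def polynomialEmbedding [DecidableEq σ] : MvPolynomial σ k →ₐ[k] k[Exponent σ] :=
  aeval fun i => single (Exponent.x i) 1

section LeadingTerm

variable [Finite σ] [LinearOrder σ]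

theorem hasLeadingTerm_polynomialEmbedding_of_yCoord_pos (p : MvPolynomial σ k) {γ : Exponent σ}
    (hγ : 0 < Exponent.yCoord γ) : HasLeadingTerm (polynomialEmbedding p) γ 0 := by
  induction p using MvPolynomial.induction_on generalizing γ with
  | C c =>
    rw [← algebraMap_eq, AlgHom.commutes]
    exact (hasLeadingTerm_single 0 c).of_lt (Exponent.lt_of_yCoord_lt (by simpa using hγ))
  | add p q hp hq => simpa using (hp hγ).add (hq hγ)
  | mul_X p i hp =>
    have := (hp (γ := γ - Exponent.x i) (by simpa using hγ)).mul
      (hasLeadingTerm_single (Exponent.x i) 1)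
    simpa [polynomialEmbedding] using this

theorem hasLeadingTerm_eval₂_polynomialEmbedding {Q : Polynomial (MvPolynomial σ k)}
    (hQ : Q.Monic) :
    HasLeadingTerm (Q.eval₂ (polynomialEmbedding (k := k) (σ := σ)).toRingHom
      (single Exponent.y (1 : k))) (Q.natDegree • Exponent.y) (1 : k) := by
  have hy (i : ℕ) := (hasLeadingTerm_single (Exponent.y : Exponent σ) (1 : k)).pow i
  have hlower : ∀ i ∈ Finset.range Q.natDegree,
      HasLeadingTerm (polynomialEmbedding (Q.coeff i) * single Exponent.y (1 : k) ^ i)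
        (Q.natDegree • Exponent.y) 0 := by
    intro i hi
    have hpos : 0 < Exponent.yCoord (Q.natDegree • Exponent.y - i • Exponent.y : Exponent σ) := by
      simpa using hi
    simpa using (hasLeadingTerm_polynomialEmbedding_of_yCoord_pos (Q.coeff i) hpos).mul (hy i)
  rw [Polynomial.eval₂_eq_sum_range, Finset.sum_range_succ, hQ.coeff_natDegree, map_one, one_mul]
  simpa using (HasLeadingTerm.sum hlower).add (hy Q.natDegree)

end LeadingTerm

namespace CoordinateRing

variable [Fintype σ] (m : σ → ℕ) (Q : Polynomial (MvPolynomial σ k))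

section Embedding

variable [DecidableEq σ]

/-- The image of `z` in the ring of Laurent polynomials. -/
noncomputable def zEmbedding : k[Exponent σ] :=
  single (-∑ i, m i • Exponent.x i) 1 *
    Q.eval₂ (polynomialEmbedding (k := k) (σ := σ)).toRingHom (single Exponent.y 1)

/-- The homomorphism to the ring of Laurent polynomials in `x` and `y` which sends `z` to
`Q(x, y) * ∏ i, x i ^ (-m i)`. -/
noncomputable def embedding : CoordinateRing m Q →ₐ[k] k[Exponent σ] :=
  lift (Sum.elim (fun i => single (Exponent.x i) 1) ![single Exponent.y 1, zEmbedding m Q]) <| by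
    have hcancel : (∏ i, single (Exponent.x i) (1 : k) ^ m i) *
        single (-∑ i, m i • Exponent.x i) 1 = 1 := by
      simp [← AddMonoidAlgebra.one_def]
    simp only [Sum.elim_inl, Sum.elim_inr, Matrix.cons_val_zero, Matrix.cons_val_one, zEmbedding,
      ← mul_assoc, hcancel, one_mul]
    rfl

variable {m Q}

theorem embedding_x (i : σ) : embedding m Q (x m Q i) = single (Exponent.x i) 1 :=
  lift_mk_X ..

theorem embedding_prod_x_pow (a : σ → ℕ) :
    embedding m Q (∏ i, x m Q i ^ a i) = single (∑ i, a i • Exponent.x i) 1 := by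
  simp [embedding_x]

theorem embedding_y : embedding m Q (y m Q) = single Exponent.y 1 :=
  lift_mk_X ..

theorem embedding_z : embedding m Q (z m Q) = zEmbedding m Q :=
  lift_mk_X ..

end Embedding

variable {m Q} [LinearOrder σ]

theorem hasLeadingTerm_embedding_xyzMonomial (hQ : Q.Monic) (a : σ → ℕ) (j c : ℕ) :
    HasLeadingTerm (embedding m Q (xyzMonomial m Q a j c))
      (Exponent.ofMonomial Q.natDegree m a j c) 1 := by
  have hz : HasLeadingTerm (zEmbedding m Q) (Exponent.z Q.natDegree m) 1 := by
    have := (hasLeadingTerm_single (-∑ i, m i • Exponent.x i) (1 : k)).mul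
      (hasLeadingTerm_eval₂_polynomialEmbedding hQ)
    simpa [zEmbedding, Exponent.z, ← sub_eq_neg_add] using this
  have hx := HasLeadingTerm.prod (s := Finset.univ) fun i _ =>
    (hasLeadingTerm_single (Exponent.x i) (1 : k)).pow (a i)
  have := (hx.mul ((hasLeadingTerm_single (Exponent.y : Exponent σ) 1).pow j)).mul (hz.pow c)
  simpa only [xyzMonomial, map_mul, map_prod, map_pow, embedding_x, embedding_y, embedding_z,
    mul_one, Exponent.ofMonomial] using this

theorem exists_hasLeadingTerm_embedding (hQ : Q.Monic) (hr : 0 < Q.natDegree)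
    {b : CoordinateRing m Q} (hb : b ≠ 0) :
    ∃ γ ∈ Exponent.monomials Q.natDegree m, ∃ c ≠ 0, HasLeadingTerm (embedding m Q b) γ c ∧
      (Exponent.yCoord γ = 0 → b ∈ (ofPolynomial m Q).range) := by
  have hmem : b ∈ normalForms m Q := normalForms_eq_top hQ hr ▸ Submodule.mem_top
  obtain ⟨l, rfl⟩ := Finsupp.mem_span_range_iff_exists_finsupp.1 hmem
  rw [← Finsupp.linearCombination_apply] at hb ⊢
  have hinj : Function.Injective fun t : (σ → ℕ) × Fin Q.natDegree × ℕ =>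
      Exponent.ofMonomial Q.natDegree m t.1 t.2.1 t.2.2 := fun t t' h => by
    obtain ⟨ha, hj, hc⟩ := Exponent.ofMonomial_injective hr t.2.1.2 t'.2.1.2 h
    exact Prod.ext ha (Prod.ext (Fin.ext hj) hc)
  obtain ⟨t, ht, hmax, hlead⟩ := exists_hasLeadingTerm_linearCombination hinj
    (fun t => hasLeadingTerm_embedding_xyzMonomial hQ t.1 t.2.1 t.2.2)
    (l := l) (by rintro rfl; simp at hb)
  refine ⟨_, ⟨t.1, t.2.1, t.2.2, rfl⟩, l t, Finsupp.mem_support_iff.1 ht, ?_, fun hy => ?_⟩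
  · rw [← AlgHom.coe_toLinearMap, Finsupp.apply_linearCombination]
    exact hlead
  · rw [Finsupp.linearCombination_apply]
    refine (ofPolynomial m Q).range.sum_mem fun t' ht' => Subalgebra.smul_mem _ ?_ _
    have hle := hy ▸ Exponent.yCoord_mono (hmax t' ht')
    obtain ⟨hj, hc⟩ := Exponent.eq_zero_of_yCoord_ofMonomial_nonpos hr hle
    rw [xyzMonomial, hj, hc, pow_zero, pow_zero, mul_one, mul_one, ← ofPolynomial_prod_X_pow]
    exact ⟨_, rfl⟩

theorem embedding_injective (hQ : Q.Monic) (hr : 0 < Q.natDegree) :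
    Function.Injective (embedding m Q) := by
  refine (injective_iff_map_eq_zero _).2 fun b hb => by_contra fun hb₀ => ?_
  obtain ⟨γ, -, c, hc, hlead, -⟩ := exists_hasLeadingTerm_embedding hQ hr hb₀
  exact hlead.ne_zero hc hb

theorem leadingExponents_embedding (hQ : Q.Monic) (hr : 0 < Q.natDegree) [IsDomain k] :
    leadingExponents (embedding m Q) = Exponent.monomials Q.natDegree m := by
  refine Set.Subset.antisymm ?_ ?_
  · rintro γ ⟨b, c, hc, hlead⟩
    have hb : b ≠ 0 := by
      rintro rfl
      exact hlead.ne_zero hc (map_zero _)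
    obtain ⟨γ', hγ', c', hc', hlead', -⟩ := exists_hasLeadingTerm_embedding hQ hr hb
    exact hlead.eq hc hlead' hc' ▸ hγ'
  · rintro _ ⟨a, j, c, rfl⟩
    exact ⟨_, 1, one_ne_zero, hasLeadingTerm_embedding_xyzMonomial hQ a j c⟩

end CoordinateRing

end Embedding

/-! ### Derivations of the coordinate ring -/

section Derivations

variable {k σ : Type*} [CommRing k]

theorem derivation_rename_eq_zero {τ M : Type*} [AddCommGroup M] [Module k M]
    [Module (MvPolynomial τ k) M] {D : Derivation k (MvPolynomial τ k) M} {f : σ → τ}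
    (hD : ∀ i, D (X (f i)) = 0) (p : MvPolynomial σ k) : D (rename f p) = 0 := by
  classical
  refine derivation_eq_zero_of_forall_mem_vars fun i hi => ?_
  obtain ⟨j, -, rfl⟩ := Finset.mem_image.1 (vars_rename _ _ hi)
  exact hD j

variable [Fintype σ] (m : σ → ℕ) (Q : Polynomial (MvPolynomial σ k))

/-- The derivation `(∏ i, x i ^ m i) ∂/∂y + (∂Q/∂y) ∂/∂z` of the polynomial ring. -/
noncomputable def jacobianDerivation :
    Derivation k (MvPolynomial (σ ⊕ Fin 2) k) (MvPolynomial (σ ⊕ Fin 2) k) :=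
  mkDerivation k (Sum.elim 0 ![∏ i, X (.inl i) ^ m i,
    Q.derivative.eval₂ (rename (Sum.inl : σ → σ ⊕ Fin 2)).toRingHom (X (.inr 0))])

theorem jacobianDerivation_rename_inl (p : MvPolynomial σ k) :
    jacobianDerivation m Q (rename Sum.inl p) = 0 :=
  derivation_rename_eq_zero (fun i => by rw [jacobianDerivation, mkDerivation_X]; rfl) p

theorem jacobianDerivation_definingPolynomial :
    jacobianDerivation m Q (definingPolynomial m Q) = 0 := by
  have hy : jacobianDerivation m Q (X (.inr 0)) = ∏ i, X (.inl i) ^ m i := mkDerivation_X ..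
  have hz : jacobianDerivation m Q (X (.inr 1)) = Q.derivative.eval₂
      (rename (Sum.inl : σ → σ ⊕ Fin 2)).toRingHom (X (.inr 0)) := mkDerivation_X ..
  have hprod : jacobianDerivation m Q (∏ i, X (.inl i) ^ m i) = 0 := by
    simpa using jacobianDerivation_rename_inl m Q (∏ i, X i ^ m i)
  rw [definingPolynomial, map_sub, Derivation.leibniz, hprod, hz,
    derivation_eval₂_of_map_eq_zero (jacobianDerivation_rename_inl m Q), hy, smul_zero, add_zero,
    smul_eq_mul, mul_comm, sub_self]

namespace CoordinateRing

variable {m Q} in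
theorem mk_jacobianDerivation_eq_zero {p : MvPolynomial (σ ⊕ Fin 2) k} (hp : mk m Q p = 0) :
    mk m Q (jacobianDerivation m Q p) = 0 := by
  obtain ⟨q, rfl⟩ := mk_eq_zero_iff.1 hp
  rw [Derivation.leibniz, jacobianDerivation_definingPolynomial, smul_zero, add_zero]
  exact mk_eq_zero_iff.2 (dvd_mul_right ..)

/-- The derivation of the coordinate ring induced by `jacobianDerivation`: it kills the `x i` and
maps `y` to `∏ i, x i ^ m i`. -/
noncomputable def standardDerivation :
    Derivation k (CoordinateRing m Q) (CoordinateRing m Q) :=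
  (jacobianDerivation m Q).liftOfSurjective mk_surjective fun _ => mk_jacobianDerivation_eq_zero

theorem standardDerivation_mk (p : MvPolynomial (σ ⊕ Fin 2) k) :
    standardDerivation m Q (mk m Q p) = mk m Q (jacobianDerivation m Q p) :=
  Derivation.liftOfSurjective_apply mk_surjective (fun _ => mk_jacobianDerivation_eq_zero) p

theorem standardDerivation_ofPolynomial (p : MvPolynomial σ k) :
    standardDerivation m Q (ofPolynomial m Q p) = 0 :=
  (standardDerivation_mk ..).trans <| (congrArg _ (jacobianDerivation_rename_inl m Q p)).trans
    (map_zero _)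

theorem standardDerivation_y :
    standardDerivation m Q (y m Q) = ofPolynomial m Q (∏ i, X i ^ m i) := by
  rw [y, standardDerivation_mk, jacobianDerivation, mkDerivation_X]
  simp [ofPolynomial]

theorem standardDerivation_z :
    standardDerivation m Q (z m Q) = Q.derivative.eval₂ (ofPolynomial m Q) (y m Q) := by
  rw [z, standardDerivation_mk, jacobianDerivation, mkDerivation_X]
  exact mk_eval₂ _

theorem isLocallyNilpotent_standardDerivation : IsLocallyNilpotent (standardDerivation m Q) := by
  have hx (i : σ) : x m Q i ∈ nilpotentSubalgebra (standardDerivation m Q) :=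
    mem_nilpotentSubalgebra_of_map_eq_zero <| by
      rw [← ofPolynomial_X, standardDerivation_ofPolynomial]
  have hy : y m Q ∈ nilpotentSubalgebra (standardDerivation m Q) :=
    mem_nilpotentSubalgebra_of_map_mem (standardDerivation_y m Q ▸ ofPolynomial_mem hx _)
  exact isLocallyNilpotent_iff.2 <| subalgebra_eq_top hx hy <|
    mem_nilpotentSubalgebra_of_map_mem (standardDerivation_z m Q ▸ eval₂_mem hx hy _)

variable {m Q}

theorem exists_logDerivation_embedding [IsDomain k] [LinearOrder σ]
    (D : Derivation k (CoordinateRing m Q) (CoordinateRing m Q)) :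
    ∃ E, ∀ b, logDerivation E (embedding m Q b) = embedding m Q (D b) := by
  obtain ⟨E, hEy, hEx⟩ := Exponent.exists_addMonoidHom
    (single (-Exponent.y) 1 * embedding m Q (D (y m Q)))
    (fun i => single (-Exponent.x i) 1 * embedding m Q (D (x m Q i)))
  refine ⟨E, fun b => ?_⟩
  let S := derivationEqualizer (embedding m Q) D (logDerivation E)
  have hcancel (γ : Exponent σ) : single γ (1 : k) * single (-γ) 1 = 1 := by
    simp [AddMonoidAlgebra.one_def]
  have hx (i : σ) : x m Q i ∈ S := by
    change logDerivation E (embedding m Q (x m Q i)) = _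
    rw [embedding_x, logDerivation_single, hEx, ← mul_assoc, hcancel, one_mul]
  have hy : y m Q ∈ S := by
    change logDerivation E (embedding m Q (y m Q)) = _
    rw [embedding_y, logDerivation_single, hEy, ← mul_assoc, hcancel, one_mul]
  have hz : z m Q ∈ S := by
    refine mem_derivationEqualizer_of_mul_mem (a := ∏ i, x m Q i ^ m i) ?_
      (prod_mem fun i _ => pow_mem (hx i) _) (prod_x_pow_mul_z (Q := Q) ▸ eval₂_mem hx hy Q)
    rw [embedding_prod_x_pow]
    exact left_ne_zero_of_mul_eq_one (hcancel _)
  exact (subalgebra_eq_top hx hy hz ▸ Algebra.mem_top : b ∈ S)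

theorem isDomain [IsDomain k] (hQ : Q.Monic) (hr : 0 < Q.natDegree) :
    IsDomain (CoordinateRing m Q) := by
  obtain ⟨_, -⟩ := exists_wellFoundedLT σ
  exact (embedding_injective hQ hr).isDomain (embedding m Q).toRingHom

theorem charZero [CharZero k] : CharZero (CoordinateRing m Q) := by
  classical
  have : CharZero k[Exponent σ] :=
    charZero_of_injective_algebraMap (FaithfulSMul.algebraMap_injective k k[Exponent σ])
  exact (embedding m Q).toRingHom.charZero

theorem standardDerivation_y_ne_zero [Nontrivial k] : standardDerivation m Q (y m Q) ≠ 0 := by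
  classical
  intro h
  have := congrArg (embedding m Q) h
  rw [standardDerivation_y, ofPolynomial_prod_X_pow, embedding_prod_x_pow, map_zero] at this
  simp at this

theorem transcendental_y [IsDomain k] [CharZero k] (hQ : Q.Monic) (hr : 0 < Q.natDegree) :
    Transcendental (ofPolynomial m Q).range (y m Q) := by
  have := isDomain hQ hr (m := m)
  have := charZero (m := m) (Q := Q)
  refine transcendental_of_map_ne_zero (D := standardDerivation m Q) ?_ standardDerivation_y_ne_zero
  rintro _ ⟨p, rfl⟩
  exact standardDerivation_ofPolynomial m Q p

theorem mem_range_of_map_eq_zero [IsDomain k] [CharZero k] (hm : ∀ i, 2 ≤ m i) (hQ : Q.Monic)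
    (hr : 2 ≤ Q.natDegree) {D : Derivation k (CoordinateRing m Q) (CoordinateRing m Q)}
    (hD : IsLocallyNilpotent D) (hD₀ : D ≠ 0) {b : CoordinateRing m Q} (hb : D b = 0) :
    b ∈ (ofPolynomial m Q).range := by
  obtain ⟨_, -⟩ := exists_wellFoundedLT σ
  have hr₀ : 0 < Q.natDegree := by lia
  obtain ⟨E, hE⟩ := exists_logDerivation_embedding D
  have hS := leadingExponents_embedding (m := m) hQ hr₀
  obtain ⟨δ, ρ, hρ, hzero⟩ := exists_isDemazureRoot (embedding_injective hQ hr₀)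
    (hS ▸ Exponent.closure_eq_top Exponent.y_mem_monomials Exponent.x_mem_monomials) hD hD₀ hE
  rcases eq_or_ne b 0 with rfl | hb₀
  · exact zero_mem _
  obtain ⟨γ, -, c, hc, hlead, hmem⟩ := exists_hasLeadingTerm_embedding hQ hr₀ hb₀
  exact hmem ((hS ▸ hρ).yCoord_eq_zero_of_map_eq_zero hr hm (hzero b γ c hc hlead hb))

theorem map_eq_zero_iff_mem_range [IsDomain k] [CharZero k] (hm : ∀ i, 2 ≤ m i) (hQ : Q.Monic)
    (hr : 2 ≤ Q.natDegree) {D : Derivation k (CoordinateRing m Q) (CoordinateRing m Q)}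
    (hD : IsLocallyNilpotent D) (hD₀ : D ≠ 0) {b : CoordinateRing m Q} :
    D b = 0 ↔ b ∈ (ofPolynomial m Q).range := by
  have hr₀ : 0 < Q.natDegree := by lia
  have := isDomain hQ hr₀ (m := m)
  have := charZero (m := m) (Q := Q)
  exact map_eq_zero_iff_mem_of_transcendental hD (fun _ => mem_range_of_map_eq_zero hm hQ hr hD hD₀)
    (transcendental_y hQ hr₀)

end CoordinateRing

end Derivations

end MakarLimanov

open MakarLimanov MakarLimanov.CoordinateRing in
theorem stmt14_general {k σ : Type*} [CommRing k] [IsDomain k] [CharZero k] [Fintype σ]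
    (m : σ → ℕ) (hm : ∀ i, 2 ≤ m i) (Q : Polynomial (MvPolynomial σ k)) (hQ : Q.Monic)
    (hr : 2 ≤ Q.natDegree) :
    makarLimanovInvariant k (CoordinateRing m Q) = (ofPolynomial m Q).range := by
  ext b
  refine ⟨fun hb => ?_, fun hb D hD => ?_⟩
  · have hne : standardDerivation m Q ≠ 0 := fun h =>
      standardDerivation_y_ne_zero (m := m) (Q := Q) (DFunLike.congr_fun h _)
    have hlnd := isLocallyNilpotent_standardDerivation m Q
    exact (map_eq_zero_iff_mem_range hm hQ hr hlnd hne).1 (hb _ hlnd)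
  · rcases eq_or_ne D 0 with rfl | hD₀
    · rfl
    · exact (map_eq_zero_iff_mem_range hm hQ hr hD hD₀).2 hb

/-- The Makar-Limanov invariant of
`X = {x^{[m]} z = Q(x,y)}` with `Q` monic in `y` of degree `r ≥ 2` and all
`mᵢ ≥ 2` equals `ℂ[x₁,…,xₙ]`: an element of the coordinate ring is killed by
every locally nilpotent `ℂ`-derivation iff it lies in the image of `ℂ[x₁,…,xₙ]`. -/
theorem stmt14 (n r : ℕ) (hr : 2 ≤ r) (m : Fin n → ℕ) (hm : ∀ i, 2 ≤ m i)
    (Q : Polynomial (MvPolynomial (Fin n) ℂ)) (hQ : Q.Monic) (hdeg : Q.natDegree = r)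
    (ι : MvPolynomial (Fin n) ℂ →+* MvPolynomial (Fin n ⊕ Fin 2) ℂ)
    (hι : ι = (MvPolynomial.rename (Sum.inl : Fin n → Fin n ⊕ Fin 2)).toRingHom)
    (y z xm : MvPolynomial (Fin n ⊕ Fin 2) ℂ)
    (hy : y = MvPolynomial.X (Sum.inr 0)) (hz : z = MvPolynomial.X (Sum.inr 1))
    (hxm : xm = ∏ i, MvPolynomial.X (Sum.inl i) ^ m i)
    (I : Ideal (MvPolynomial (Fin n ⊕ Fin 2) ℂ))
    (hI : I = Ideal.span {xm * z - Polynomial.eval₂ ι y Q}) :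
    ∀ b : MvPolynomial (Fin n ⊕ Fin 2) ℂ ⧸ I,
      (∀ D : Derivation ℂ
          (MvPolynomial (Fin n ⊕ Fin 2) ℂ ⧸ I) (MvPolynomial (Fin n ⊕ Fin 2) ℂ ⧸ I),
        (∀ c, ∃ k : ℕ, (⇑D)^[k] c = 0) → D b = 0) ↔
      b ∈ RingHom.range ((Ideal.Quotient.mk I).comp ι) := by
  subst hdeg hι hy hz hxm hI
  -- The quotient is `CoordinateRing m Q` by definition.
  exact SetLike.ext_iff.1 (stmt14_general m hm Q hQ hr)
end
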